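/- arXiv:2301.05073 — 6 statements merged into one kernel-verified Lean document; each statement's English description precedes it below -/
import Mathlib

section
/- Let s ≥ 1 be an integer. Assume that DRIFT, SC(s), FC(s) and JC hold at every (v,ℓ) with v ∈ V and integer ℓ ≥ 1. Then for all layers ℓ̲ ≤ ℓ̄ in ℕ: Ψ^s(ℓ̄) ≤ max{0, Ξ^s(ℓ̲) − (ℓ̄ − ℓ̲ + 1)·κ} + (ℓ̄ − ℓ̲)·κ/2. -/
/-- One-layer relation between shifted pulse times `T` (layer `j`) and `T'` (layer `j-1`). -/
structure LayerStep {V : Type*} (G : SimpleGraph V) (κ S R : ℝ) (T T' : V → ℝ) : Prop where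
  jump : ∀ y, T y ≤ T' y ∨ ∀ x, G.Adj y x → T y + κ ≤ T' x
  slow : ∀ w, (∀ x, G.Adj w x → T' x ≤ T w + κ/2 + S) ∨
    (∃ x, G.Adj w x ∧ T' x ≤ T w + κ/2 - S) ∨ T' w ≤ T w + κ/2
  low : ∀ w, (∀ x, G.Adj w x → T' x ≤ T w - κ/2) ∨ T' w ≤ T w + 3*κ/2
  fast : ∀ x, (∃ z, G.Adj x z ∧ T x + κ + R ≤ T' z) ∨
    (∀ z, G.Adj x z → T x + κ - R ≤ T' z) ∨ T x + κ ≤ T' x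

/-- The invariant of the backward trace: home `p`, witness `y`, late node `x`, early node `w`. -/
def TraceState {V : Type*} (G : SimpleGraph V) (S R : ℝ) (T : V → ℝ) (e δ : ℝ) : Prop :=
  ∃ (a : ℝ) (p y x w : V) (N : ℕ),
    a + e + R * (G.dist x p : ℝ) ≤ T x ∧ a ≤ T y ∧ T w ≤ a - δ - S * (N : ℝ) ∧
    ((y = p ∧ G.dist p w ≤ N ∧ w ≠ p) ∨
     (G.Adj p y ∧ G.dist y w + 1 ≤ N ∧ w ≠ y) ∨
     (G.Adj p y ∧ G.dist p w + 1 ≤ N ∧ w ≠ y))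

theorem exists_closer {V : Type*} {G : SimpleGraph V} (hc : G.Connected) {q w : V} (h : w ≠ q) :
    ∃ x, G.Adj w x ∧ G.dist q w = G.dist q x + 1 := by
  obtain ⟨W, hW⟩ := hc.exists_walk_length_eq_dist w q
  cases W with
  | nil => exact absurd rfl h
  | cons hadj W' =>
    rename_i x
    refine ⟨x, hadj, ?_⟩
    have h1 : G.dist x q ≤ W'.length := SimpleGraph.dist_le W'
    have h2 : G.dist w q ≤ G.dist w x + G.dist x q := hc.dist_triangle
    have h3 : G.dist w x = 1 := SimpleGraph.dist_eq_one_iff_adj.mpr hadj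
    simp only [SimpleGraph.Walk.length_cons] at hW
    rw [SimpleGraph.dist_comm (u := q) (v := w), SimpleGraph.dist_comm (u := q) (v := x)]
    omega

theorem dist_adj_le {V : Type*} {G : SimpleGraph V} (hc : G.Connected) {q w x : V}
    (h : G.Adj w x) : G.dist q x ≤ G.dist q w + 1 := by
  have h2 : G.dist q x ≤ G.dist q w + G.dist w x := hc.dist_triangle
  have h3 : G.dist w x = 1 := SimpleGraph.dist_eq_one_iff_adj.mpr h
  omega

/-- Moving the early node one layer back, relative to a base `q`. -/
theorem early_move {V : Type*} {G : SimpleGraph V} (hc : G.Connected) {κ S R : ℝ}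
    {T T' : V → ℝ} (L : LayerStep G κ S R T T') {q w : V} {c : ℝ} {N r : ℕ}
    (hw : T w ≤ c - S * (N : ℝ)) (hN : G.dist q w + r ≤ N) :
    (∃ w' N', T' w' ≤ c + κ/2 - S * ((N' : ℕ) : ℝ) ∧ G.dist q w' + r ≤ N' ∧
      (w' = w ∨ G.Adj w w')) ∨
    (w = q ∧ ∀ x, G.Adj w x → T' x ≤ T w + κ/2 + S) := by
  rcases L.slow w with h | ⟨x, hx, h⟩ | h
  · by_cases hq : w = q
    · exact Or.inr ⟨hq, h⟩
    · obtain ⟨x, hx, hd⟩ := exists_closer hc hq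
      obtain ⟨M, rfl⟩ : ∃ M, N = M + 1 := ⟨N - 1, by omega⟩
      refine Or.inl ⟨x, M, ?_, by omega, Or.inr hx⟩
      have := h x hx
      push_cast at hw
      linarith
  · refine Or.inl ⟨x, N + 1, ?_, ?_, Or.inr hx⟩
    · push_cast; linarith
    · have := dist_adj_le hc (q := q) hx
      omega
  · exact Or.inl ⟨w, N, by linarith, hN, Or.inl rfl⟩

/-- Moving the late node one layer back, relative to the home `p`. -/
theorem late_move {V : Type*} {G : SimpleGraph V} (hc : G.Connected) {κ S R : ℝ} (hR : 0 ≤ R)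
    {T T' : V → ℝ} (L : LayerStep G κ S R T T') {p x : V} {c : ℝ}
    (hx : c + R * (G.dist x p : ℝ) ≤ T x) :
    (∃ x', c + κ + R * (G.dist x' p : ℝ) ≤ T' x') ∨
    (x = p ∧ ∀ z, G.Adj p z → T p + κ - R ≤ T' z) := by
  rcases L.fast x with ⟨z, hz, h⟩ | h | h
  · left
    refine ⟨z, ?_⟩
    have h1 := dist_adj_le hc (q := p) hz
    rw [SimpleGraph.dist_comm (u := p), SimpleGraph.dist_comm (u := p)] at h1
    have h2 : (G.dist z p : ℝ) ≤ G.dist x p + 1 := by exact_mod_cast h1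
    nlinarith
  · by_cases hq : x = p
    · subst hq; exact Or.inr ⟨rfl, h⟩
    · obtain ⟨z, hz, hd⟩ := exists_closer hc hq
      left
      refine ⟨z, ?_⟩
      rw [SimpleGraph.dist_comm (u := p), SimpleGraph.dist_comm (u := p)] at hd
      rw [hd] at hx
      push_cast at hx
      have := h z hz
      linarith
  · exact Or.inl ⟨x, by linarith⟩

theorem trace_step {V : Type*} {G : SimpleGraph V} (hc : G.Connected) {κ S R : ℝ}
    (hκ : 0 < κ) (hS : 4 * κ ≤ S) (hRS : R = S - 2 * κ)
    {T T' : V → ℝ} (L : LayerStep G κ S R T T') {e δ : ℝ} (he : 0 ≤ e) (hδ : κ / 2 < δ)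
    (h : TraceState G S R T e δ) : TraceState G S R T' (e + κ) (δ - κ/2) := by
  have hR : 0 ≤ R := by linarith
  have hS0 : 0 ≤ S := by linarith
  obtain ⟨a, p, y, x, w, N, hx, hy, hw, hst⟩ := h
  -- an early node never meets a node which is at least `a`
  have nohit : ∀ (z z' : V) (b : ℝ) (M : ℕ), T' z ≤ b - δ + κ/2 - S * (M : ℝ) → b ≤ T' z' →
      z ≠ z' := by
    rintro z _ b M h1 h2 rfl
    have : 0 ≤ S * (M : ℝ) := by positivity
    linarith
  have nohit0 : ∀ (z z' : V) (b : ℝ) (M : ℕ), T z ≤ b - δ - S * (M : ℝ) → b ≤ T z' →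
      z ≠ z' := by
    rintro z _ b M h1 h2 rfl
    have : 0 ≤ S * (M : ℝ) := by positivity
    linarith
  have big : ∀ M : ℕ, 1 ≤ M → S ≤ S * (M : ℝ) := by
    intro M hM
    have : (1 : ℝ) ≤ M := by exact_mod_cast hM
    nlinarith
  -- normalise
  have hst' : (a ≤ T p ∧ G.dist p w ≤ N ∧ w ≠ p) ∨
     (x ≠ p ∧ G.Adj p y ∧ G.dist y w + 1 ≤ N ∧ w ≠ y) ∨
     (x ≠ p ∧ G.Adj p y ∧ G.dist p w + 1 ≤ N ∧ w ≠ y) := by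
    rcases hst with ⟨h1, h2, h3⟩ | ⟨h1, h2, h3⟩ | ⟨h1, h2, h3⟩
    · left; exact ⟨h1 ▸ hy, h2, h3⟩
    · by_cases hxp : x = p
      · left
        subst hxp
        simp at hx
        have h4 : a ≤ T x := by linarith
        refine ⟨h4, ?_, nohit0 _ _ a N hw h4⟩
        have := dist_adj_le hc (q := w) h1.symm
        rw [SimpleGraph.dist_comm (u := w), SimpleGraph.dist_comm (u := w)] at this
        omega
      · exact Or.inr (Or.inl ⟨hxp, h1, h2, h3⟩)
    · by_cases hxp : x = p
      · left
        subst hxp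
        simp at hx
        have h4 : a ≤ T x := by linarith
        exact ⟨h4, by omega, nohit0 _ _ a N hw h4⟩
      · exact Or.inr (Or.inr ⟨hxp, h1, h2, h3⟩)
  have hmove := late_move hc hR L hx
  rcases hst' with ⟨hp, hN, hwp⟩ | ⟨hxp, hadj, hN, hwy⟩ | ⟨hxp, hadj, hN, hwy⟩
  · -- the witness is at home
    obtain ⟨w', N', hw', hN', hww'⟩ : ∃ w' N', T' w' ≤ a - δ + κ/2 - S * ((N' : ℕ) : ℝ) ∧
        G.dist p w' + 0 ≤ N' ∧ (w' = w ∨ G.Adj w w') := by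
      rcases early_move hc L (q := p) (r := 0) hw (by omega) with h | ⟨h, -⟩
      · exact h
      · exact absurd h hwp
    by_cases hw'p : w' = p
    · subst hw'p
      have hadj : G.Adj w w' := by
        rcases hww' with h | h
        · exact absurd h.symm hwp
        · exact h
      have hN1 : 1 ≤ N := by
        have : G.dist w' w = 1 := SimpleGraph.dist_eq_one_iff_adj.mpr hadj.symm
        omega
      have hbig := big N hN1
      rcases L.jump w' with hj | hj
      · exact absurd rfl (nohit w' w' a N' hw' (by linarith))
      · have h1 := hj w hadj.symm
        rcases L.low w with hl | hl
        · have h2 := hl w' hadj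
          rcases hmove with ⟨x', hx'⟩ | ⟨hxp, -⟩
          · refine ⟨a, w', w, x', w', N, by linarith, by linarith, by linarith, ?_⟩
            right; right
            exact ⟨hadj.symm, by simpa using hN1, hadj.ne'⟩
          · subst hxp
            simp at hx
            refine ⟨a, w, w, w, x, N, ?_, by linarith, by linarith, ?_⟩
            · simp; linarith
            · left
              refine ⟨rfl, ?_, hadj.ne'⟩
              rw [SimpleGraph.dist_eq_one_iff_adj.mpr hadj]; exact hN1
        · exfalso; linarith
    · obtain ⟨p', hp', hd⟩ := exists_closer hc (q := w') (w := p) (Ne.symm hw'p)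
      rw [SimpleGraph.dist_comm (u := w'), SimpleGraph.dist_comm (u := w')] at hd
      rcases hmove with ⟨x', hx'⟩ | ⟨hxp, hf⟩
      · rcases L.jump p with hj | hj
        · exact ⟨a, p, p, x', w', N', by linarith, by linarith, by linarith,
            Or.inl ⟨rfl, by omega, hw'p⟩⟩
        · have h1 := hj p' hp'
          exact ⟨a, p, p', x', w', N', by linarith, by linarith, by linarith,
            Or.inr (Or.inl ⟨hp', by omega, nohit _ _ a N' hw' (by linarith)⟩)⟩
      · subst hxp
        simp at hx
        have h1 := hf p' hp'
        obtain ⟨M, rfl⟩ : ∃ M, N' = M + 1 := ⟨N' - 1, by omega⟩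
        have hw2 : T' w' ≤ (a - R) - δ + κ/2 - S * (M : ℝ) := by
          push_cast at hw'
          linarith
        refine ⟨a - R, p', p', p', w', M, ?_, by linarith, by linarith,
          Or.inl ⟨rfl, by omega, nohit _ _ (a - R) M hw2 (by linarith)⟩⟩
        simp; linarith
  · -- witness next to home, early node tied to the witness
    obtain ⟨x', hx'⟩ : ∃ x', a + e + κ + R * (G.dist x' p : ℝ) ≤ T' x' := by
      rcases hmove with h | ⟨h, -⟩
      · exact h
      · exact absurd h hxp
    obtain ⟨w', N', hw', hN', -⟩ : ∃ w' N', T' w' ≤ a - δ + κ/2 - S * ((N' : ℕ) : ℝ) ∧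
        G.dist y w' + 1 ≤ N' ∧ (w' = w ∨ G.Adj w w') := by
      rcases early_move hc L (q := y) (r := 1) hw hN with h | ⟨h, -⟩
      · exact h
      · exact absurd h hwy
    rcases L.jump y with hj | hj
    · exact ⟨a, p, y, x', w', N', by linarith, by linarith, by linarith,
        Or.inr (Or.inl ⟨hadj, hN', nohit _ _ a N' hw' (by linarith)⟩)⟩
    · have h1 := hj p hadj.symm
      refine ⟨a, p, p, x', w', N', by linarith, by linarith, by linarith,
        Or.inl ⟨rfl, ?_, nohit _ _ a N' hw' (by linarith)⟩⟩
      have := dist_adj_le hc (q := w') hadj.symm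
      rw [SimpleGraph.dist_comm (u := w'), SimpleGraph.dist_comm (u := w')] at this
      omega
  · -- witness next to home, early node tied to home
    obtain ⟨x', hx'⟩ : ∃ x', a + e + κ + R * (G.dist x' p : ℝ) ≤ T' x' := by
      rcases hmove with h | ⟨h, -⟩
      · exact h
      · exact absurd h hxp
    have hbig := big N (by omega)
    rcases early_move hc L (q := p) (r := 1) hw hN with ⟨w', N', hw', hN', -⟩ | ⟨hwp, hl1⟩
    · rcases L.jump y with hj | hj
      · exact ⟨a, p, y, x', w', N', by linarith, by linarith, by linarith,
          Or.inr (Or.inr ⟨hadj, hN', nohit _ _ a N' hw' (by linarith)⟩)⟩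
      · have h1 := hj p hadj.symm
        exact ⟨a, p, p, x', w', N', by linarith, by linarith, by linarith,
          Or.inl ⟨rfl, by omega, nohit _ _ a N' hw' (by linarith)⟩⟩
    · subst hwp
      rcases L.jump y with hj | hj
      · exfalso
        have := hl1 y hadj
        linarith
      · have h1 := hj w hadj.symm
        rcases L.low w with hl | hl
        · have h2 := hl y hadj
          refine ⟨a, w, w, x', y, N, by linarith, by linarith, by linarith,
            Or.inl ⟨rfl, ?_, hadj.ne'⟩⟩
          rw [SimpleGraph.dist_eq_one_iff_adj.mpr hadj]; omega
        · exfalso; linarith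

theorem trace_iter {V : Type*} {G : SimpleGraph V} (hc : G.Connected) {κ S R : ℝ}
    (hκ : 0 < κ) (hS : 4 * κ ≤ S) (hRS : R = S - 2 * κ)
    {T : ℕ → V → ℝ} (L : ∀ j, LayerStep G κ S R (T (j+1)) (T j)) (lo : ℕ) :
    ∀ (k : ℕ) (e δ : ℝ), 0 ≤ e → (k : ℝ) * (κ / 2) < δ → TraceState G S R (T (lo + k)) e δ →
      TraceState G S R (T lo) (e + k * κ) (δ - k * (κ/2)) := by
  intro k
  induction k with
  | zero => intro e δ _ _ h; simpa using h
  | succ k ih =>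
    intro e δ he hδ h
    push_cast at hδ
    have hk : 0 ≤ (k : ℝ) * (κ/2) := by positivity
    have h1 := trace_step hc hκ hS hRS (L (lo + k)) he (by linarith) h
    have h2 := ih _ _ (by linarith) (by linarith) h1
    have e1 : e + κ + k * κ = e + ((k + 1 : ℕ) : ℝ) * κ := by push_cast; ring
    have e2 : δ - κ/2 - k * (κ/2) = δ - ((k + 1 : ℕ) : ℝ) * (κ/2) := by push_cast; ring
    rwa [e1, e2] at h2



/-- potential decrease (Theorem `psi_bound`).
`tmax`/`tmin` over neighbours are expressed pointwise: an inequality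
`x ≤ t_own - tmax + c` is equivalent to `∀ w ~ v, x ≤ t_own - t_w + c`, and
`x ≤ t_own - tmin - c` is equivalent to `∃ w ~ v, x ≤ t_own - t_w - c`
(the neighbourhood being nonempty since the minimum degree is `2`);
similarly for the reverse inequalities in FC and JC. -/
theorem stmt7
    (ϑ u d Λ κ : ℝ)
    (hϑ : 1 < ϑ) (hu : 0 ≤ u) (hd : u ≤ d) (hΛ : d < Λ)
    (hκ : κ = 2 * (u + (1 - 1/ϑ) * (Λ - d)))
    {V : Type*} [Fintype V] [Nonempty V]
    (G : SimpleGraph V) [DecidableRel G.Adj]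
    (hconn : G.Connected) (hdeg : ∀ v : V, 2 ≤ G.degree v)
    (D : ℕ) (hD : 1 ≤ D) (hdiam : ∀ v w : V, G.dist v w ≤ D)
    (t : V → ℕ → ℝ) (C : V → ℕ → ℝ)
    (s : ℕ) (hs : 1 ≤ s)
    (hDRIFT : ∀ (v : V) (ℓ : ℕ),
      d - u + (Λ - d - C v (ℓ+1)) / ϑ ≤ t v (ℓ+1) - t v ℓ ∧
      t v (ℓ+1) - t v ℓ ≤ Λ - C v (ℓ+1))
    (hSC : ∀ (v : V) (ℓ : ℕ),
      (∀ w : V, G.Adj v w → C v (ℓ+1) / ϑ ≤ t v ℓ - t w ℓ + 4*(s:ℝ)*κ) ∨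
      (∃ w : V, G.Adj v w ∧ C v (ℓ+1) / ϑ ≤ t v ℓ - t w ℓ - 4*(s:ℝ)*κ) ∨
      C v (ℓ+1) ≤ 0)
    (hFC : ∀ (v : V) (ℓ : ℕ),
      (∃ w : V, G.Adj v w ∧ t v ℓ - t w ℓ + (4*(s:ℝ)-2)*κ + κ ≤ C v (ℓ+1)) ∨
      (∀ w : V, G.Adj v w → t v ℓ - t w ℓ - (4*(s:ℝ)-2)*κ + κ ≤ C v (ℓ+1)) ∨
      κ ≤ C v (ℓ+1))
    (hJC : ∀ (v : V) (ℓ : ℕ),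
      (κ < C v (ℓ+1)/ϑ ∧ ∀ w : V, G.Adj v w → C v (ℓ+1)/ϑ ≤ t v ℓ - t w ℓ - κ) ∨
      (C v (ℓ+1) < 0 ∧ ∀ w : V, G.Adj v w → t v ℓ - t w ℓ + κ ≤ C v (ℓ+1)) ∨
      (0 ≤ C v (ℓ+1)/ϑ ∧ C v (ℓ+1)/ϑ ≤ κ)) :
    ∀ lo hi : ℕ, lo ≤ hi → ∀ v w : V,
      t v hi - t w hi - 4*(s:ℝ)*κ*(G.dist v w : ℝ) ≤
        max 0 ((⨆ p : V, ⨆ q : V,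
            (t p lo - t q lo - (4*(s:ℝ)-2)*κ*(G.dist p q : ℝ)))
          - ((hi : ℝ) - (lo : ℝ) + 1)*κ)
        + ((hi : ℝ) - (lo : ℝ)) * (κ/2) := by
  intro lo hi hlh v w
  obtain ⟨k, rfl⟩ : ∃ k, hi = lo + k := ⟨hi - lo, by omega⟩
  have hϑ0 : 0 < ϑ := by linarith
  have hinv : 1/ϑ < 1 := by rw [div_lt_one hϑ0]; exact hϑ
  have hκ0 : 0 < κ := by
    rw [hκ]
    have : 0 < (1 - 1/ϑ) * (Λ - d) := mul_pos (by linarith) (by linarith)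
    linarith
  have hs' : (1 : ℝ) ≤ s := by exact_mod_cast hs
  have hS : 4 * κ ≤ 4 * (s:ℝ) * κ := by nlinarith
  have hR : (4*(s:ℝ)-2)*κ = 4*(s:ℝ)*κ - 2*κ := by ring
  have hL : ∀ j, LayerStep G κ (4*(s:ℝ)*κ) ((4*(s:ℝ)-2)*κ)
      (fun v => t v (j+1) - Λ * ((j+1 : ℕ) : ℝ)) (fun v => t v j - Λ * (j : ℝ)) := by
    intro j
    have hup : ∀ v, t v (j+1) - Λ * ((j+1 : ℕ) : ℝ) ≤ t v j - Λ * (j : ℝ) - C v (j+1) := by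
      intro v
      have := (hDRIFT v j).2
      push_cast
      linarith
    have hlow : ∀ v, t v j - Λ * (j : ℝ) - κ/2 - C v (j+1) / ϑ ≤
        t v (j+1) - Λ * ((j+1 : ℕ) : ℝ) := by
      intro v
      have h1 := (hDRIFT v j).1
      have h2 : (Λ - d - C v (j+1)) / ϑ = (1/ϑ) * (Λ - d) - C v (j+1) / ϑ := by ring
      rw [h2] at h1
      have h3 : κ/2 = u + (Λ - d) - (1/ϑ) * (Λ - d) := by rw [hκ]; ring
      push_cast
      linarith
    refine ⟨fun y => ?_, fun w => ?_, fun w => ?_, fun x => ?_⟩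
    · have h0 := hup y
      rcases hJC y j with ⟨h, -⟩ | ⟨-, h⟩ | ⟨h, -⟩
      · left
        have : 0 < C y (j+1) := by
          have h5 : 0 < C y (j+1) / ϑ := by linarith
          exact (div_pos_iff_of_pos_right hϑ0).mp h5
        linarith
      · right
        intro x hx
        have := h x hx
        linarith
      · left
        have : 0 ≤ C y (j+1) := by
          have h5 := mul_nonneg h hϑ0.le
          rwa [div_mul_cancel₀ _ hϑ0.ne'] at h5
        linarith
    · have h0 := hlow w
      rcases hSC w j with h | ⟨x, hx, h⟩ | h
      · left
        intro x hx
        have := h x hx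
        linarith
      · right; left
        exact ⟨x, hx, by linarith⟩
      · right; right
        have : C w (j+1) / ϑ ≤ 0 := div_nonpos_of_nonpos_of_nonneg h hϑ0.le
        linarith
    · have h0 := hlow w
      rcases hJC w j with ⟨-, h⟩ | ⟨h, -⟩ | ⟨-, h⟩
      · left
        intro x hx
        have := h x hx
        linarith
      · right
        have : C w (j+1) / ϑ ≤ 0 := div_nonpos_of_nonpos_of_nonneg h.le hϑ0.le
        linarith
      · right; linarith
    · have h0 := hup x
      rcases hFC x j with ⟨z, hz, h⟩ | h | h
      · left; exact ⟨z, hz, by linarith⟩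
      · right; left
        intro z hz
        have := h z hz
        linarith
      · right; right; linarith
  set ψ := t v (lo+k) - t w (lo+k) - 4*(s:ℝ)*κ*(G.dist v w : ℝ) with hψ
  set Ξ := ⨆ p : V, ⨆ q : V, (t p lo - t q lo - (4*(s:ℝ)-2)*κ*(G.dist p q : ℝ)) with hΞ
  have hk0 : 0 ≤ (k : ℝ) * (κ/2) := by positivity
  push_cast
  rw [show (lo : ℝ) + k - lo = k by ring]
  by_cases hsmall : ψ ≤ k * (κ/2)
  · have := le_max_left 0 (Ξ - ((k : ℝ) + 1) * κ)
    linarith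
  push Not at hsmall
  have hvw : w ≠ v := by
    rintro rfl
    simp at hψ
    linarith
  have hstart : TraceState G (4*(s:ℝ)*κ) ((4*(s:ℝ)-2)*κ)
      (fun v => t v (lo+k) - Λ * ((lo+k : ℕ) : ℝ)) 0 ψ := by
    refine ⟨t v (lo+k) - Λ * ((lo+k : ℕ) : ℝ), v, v, v, w, G.dist v w, ?_, le_rfl, ?_,
      Or.inl ⟨rfl, le_rfl, hvw⟩⟩
    · simp
    · simp only [hψ]; linarith
  obtain ⟨a, p, y, x, z, N, hx, hy, hz, hst⟩ := trace_iter hconn hκ0 hS hR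
    (T := fun j v => t v j - Λ * (j : ℝ)) hL lo k 0 ψ le_rfl hsmall hstart
  have hN : 1 ≤ N ∧ G.dist p z ≤ N := by
    rcases hst with ⟨-, h2, h3⟩ | ⟨h1, h2, h3⟩ | ⟨h1, h2, h3⟩
    · have := hconn.pos_dist_of_ne (Ne.symm h3)
      omega
    · have := dist_adj_le hconn (q := z) h1.symm
      rw [SimpleGraph.dist_comm (u := z), SimpleGraph.dist_comm (u := z)] at this
      omega
    · omega
  have hsup : t x lo - t z lo - (4*(s:ℝ)-2)*κ*(G.dist x z : ℝ) ≤ Ξ :=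
    le_trans
      (le_ciSup (f := fun q => t x lo - t q lo - (4*(s:ℝ)-2)*κ*(G.dist x q : ℝ))
        (Set.finite_range _).bddAbove z)
      (le_ciSup (f := fun p => ⨆ q : V, (t p lo - t q lo - (4*(s:ℝ)-2)*κ*(G.dist p q : ℝ)))
        (Set.finite_range _).bddAbove x)
  have htri : G.dist x z ≤ G.dist x p + N :=
    le_trans hconn.dist_triangle (Nat.add_le_add_left hN.2 _)
  have htri' : (G.dist x z : ℝ) ≤ G.dist x p + N := by exact_mod_cast htri
  have hR0 : 0 ≤ (4*(s:ℝ)-2)*κ := by rw [hR]; linarith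
  have hmul := mul_le_mul_of_nonneg_left htri' hR0
  have hN1 : (1 : ℝ) ≤ N := by exact_mod_cast hN.1
  have hNκ : κ ≤ N * κ := by nlinarith
  have hfin : ψ + k * (κ/2) + 2 * κ ≤ Ξ := by
    have e1 : 4*(s:ℝ)*κ * N = (4*(s:ℝ)-2)*κ * N + 2 * (N * κ) := by ring
    simp only at hx hz
    rw [mul_add] at hmul
    linarith
  have := le_max_right 0 (Ξ - ((k : ℝ) + 1) * κ)
  linarith
end

section
/- Under the standing assumptions, for every ℓ ∈ ℕ: if ℓ < 4·Ξ^1(0)/κ then Ψ^1(ℓ) ≤ Ξ^1(0), and if ℓ ≥ 4·Ξ^1(0)/κ then Ψ^1(ℓ) ≤ 4κD. -/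
/-- Abstract normalised dynamics (`κ = 1`, drift `Λ` removed). -/
structure Dyn {V : Type*} (G : SimpleGraph V) (τ : V → ℕ → ℝ) : Prop where
  U1 : ∀ v l, (∃ x, G.Adj v x ∧ τ v (l+1) ≤ τ x l - 3) ∨
    (∀ x, G.Adj v x → τ v (l+1) ≤ τ x l + 1) ∨ τ v (l+1) ≤ τ v l - 1
  U2 : ∀ v l, τ v (l+1) ≤ τ v l ∨ ∀ x, G.Adj v x → τ v (l+1) ≤ τ x l - 1
  L1 : ∀ v l, (∀ x, G.Adj v x → τ x l - 9/2 ≤ τ v (l+1)) ∨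
    (∃ x, G.Adj v x ∧ τ x l + 7/2 ≤ τ v (l+1)) ∨ τ v l - 1/2 ≤ τ v (l+1)
  L2 : ∀ v l, (∀ x, G.Adj v x → τ x l + 1/2 ≤ τ v (l+1)) ∨ τ v l - 3/2 ≤ τ v (l+1)

section aux
variable {V : Type*} {G : SimpleGraph V} {τ : V → ℕ → ℝ}

lemma dist_closer (hc : G.Connected) {v w : V} (h : v ≠ w) :
    ∃ x, G.Adj v x ∧ (G.dist x w : ℝ) = G.dist v w - 1 := by
  obtain ⟨p, hp⟩ := hc.exists_walk_length_eq_dist v w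
  cases p with
  | nil => exact absurd rfl h
  | @cons _ x _ hx q =>
    refine ⟨x, hx, ?_⟩
    have h1 : G.dist x w ≤ q.length := SimpleGraph.dist_le q
    have h2 : G.dist v w ≤ G.dist v x + G.dist x w := hc.dist_triangle
    have h3 : G.dist v x = 1 := SimpleGraph.dist_eq_one_iff_adj.mpr hx
    simp only [SimpleGraph.Walk.length_cons] at hp
    have h4 : G.dist v w = G.dist x w + 1 := by omega
    rw [h4]; push_cast; ring

lemma dist_tri (hc : G.Connected) (u v w : V) :
    (G.dist u w : ℝ) ≤ G.dist u v + G.dist v w := by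
  exact_mod_cast hc.dist_triangle

lemma dist_symm (u v : V) : (G.dist u v : ℝ) = G.dist v u := by
  rw [SimpleGraph.dist_comm]

lemma dist_adj {u v : V} (h : G.Adj u v) : (G.dist u v : ℝ) = 1 := by
  rw [SimpleGraph.dist_eq_one_iff_adj.mpr h]; norm_num

lemma zstep (hc : G.Connected) (hd : Dyn G τ) (l : ℕ) {z p : V} (h : z ≠ p) :
    ∃ y, (y = z ∨ G.Adj z y) ∧
      τ z (l+1) - 2 * G.dist z p ≤ τ y l - 2 * G.dist y p - 1 := by
  rcases hd.U1 z l with ⟨x, hx, h1⟩ | h1 | h1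
  · refine ⟨x, Or.inr hx, ?_⟩
    have := dist_tri hc x z p
    have := dist_adj hx.symm
    linarith
  · obtain ⟨x, hx, h2⟩ := dist_closer hc h
    exact ⟨x, Or.inr hx, by have := h1 x hx; linarith⟩
  · exact ⟨z, Or.inl rfl, by linarith⟩

lemma xi_step (hc : G.Connected) (hd : Dyn G τ) (l : ℕ) (a : ℝ) (ha : 0 ≤ a)
    (h : ∀ v w, τ v l - τ w l - 2 * G.dist v w ≤ a) (v w : V) :
    τ v (l+1) - τ w (l+1) - 2 * G.dist v w ≤ a + 1/2 := by
  by_cases hvw : v = w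
  · subst hvw; simp; linarith
  obtain ⟨y, hy, h1⟩ := zstep hc hd l hvw
  rcases hd.L2 w l with h2 | h2
  · by_cases hyw : y = w
    · subst hyw
      have hadj : G.Adj v y := by
        rcases hy with h | h
        · exact absurd h.symm hvw
        · exact h
      have h3 := h2 v hadj.symm
      have h4 := dist_adj hadj
      rcases hd.U2 v l with h5 | h5
      · linarith
      · have h6 := h5 y hadj
        have h7 := h y v
        have := dist_symm (G := G) v y
        linarith
    · obtain ⟨x, hx, h3⟩ := dist_closer hc (Ne.symm hyw)
      have h4 := h2 x hx
      have h5 := h y x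
      have := dist_symm (G := G) y x
      have := dist_symm (G := G) y w
      linarith
  · have := h y w; linarith

lemma xi_grow (hc : G.Connected) (hd : Dyn G τ) (a : ℝ) (ha : 0 ≤ a)
    (h : ∀ v w, τ v 0 - τ w 0 - 2 * G.dist v w ≤ a) (l : ℕ) (v w : V) :
    τ v l - τ w l - 2 * G.dist v w ≤ a + l/2 := by
  induction l generalizing v w with
  | zero => simpa using h v w
  | succ l ih =>
    have := xi_step hc hd l (a + l/2) (by positivity) ih v w
    push_cast; linarith

lemma wstep (hc : G.Connected) (hd : Dyn G τ) (l : ℕ) {w p : V} (h : w ≠ p) :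
    ∃ y, (y = p → G.Adj w p) ∧
      τ y l + 4 * G.dist y p - 1/2 ≤ τ w (l+1) + 4 * G.dist w p := by
  rcases hd.L1 w l with h1 | ⟨x, hx, h1⟩ | h1
  · obtain ⟨x, hx, h2⟩ := dist_closer hc h
    exact ⟨x, fun e => e ▸ hx, by have := h1 x hx; linarith⟩
  · refine ⟨x, fun e => e ▸ hx, ?_⟩
    have := dist_tri hc x w p
    have := dist_adj hx.symm
    linarith
  · exact ⟨w, fun e => absurd e h, by linarith⟩

/-- the bound -/
noncomputable def Bd (a T : ℝ) : ℝ := max (a - T/2) (a/3 + T/6)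

lemma Bd_shift (a T n : ℝ) (hn : 0 ≤ n) : Bd a T - n/2 ≤ Bd a (T+n) := by
  unfold Bd
  rcases max_choice (a - T/2) (a/3 + T/6) with h | h <;> rw [h]
  · exact le_trans (by linarith) (le_max_left _ _)
  · exact le_trans (by linarith) (le_max_right _ _)

lemma Bd_nonneg (a T : ℝ) (ha : 0 ≤ a) (hT : 0 ≤ T) : 0 ≤ Bd a T :=
  le_trans (by positivity) (le_max_right _ _)

lemma main_chain (hc : G.Connected) (hd : Dyn G τ) (a : ℝ) (ha : 0 ≤ a)
    (h : ∀ v w, τ v 0 - τ w 0 - 2 * G.dist v w ≤ a) (m : ℕ) :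
    ∀ (n : ℕ) (p z w : V),
      τ z m - τ w m - 2 * G.dist z p - 4 * G.dist w p - (n:ℝ)/2 ≤ Bd a ((m:ℝ)+n) ∨
      τ p m - τ w m - 4 * G.dist w p + (n:ℝ)/2 ≤ Bd a ((m:ℝ)+n) := by
  induction m with
  | zero =>
    intro n p z w
    left
    refine le_trans ?_ (le_max_left _ _)
    have h1 := h z w
    have h2 := dist_tri hc z p w
    have h3 := dist_symm (G := G) p w
    have h4 : (0:ℝ) ≤ G.dist w p := by positivity
    push_cast; linarith
  | succ m ih =>
    have hn0 : ∀ p w, τ p m - τ w m - 4 * G.dist w p ≤ Bd a m := by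
      intro p w
      have := ih 0 p p w
      simpa using this
    intro n p z w
    have hB0 : 0 ≤ Bd a (((m+1:ℕ):ℝ)+n) := Bd_nonneg _ _ ha (by positivity)
    by_cases hwp : w = p
    · subst hwp
      have h1 := xi_grow hc hd a ha h (m+1) z w
      simp only [SimpleGraph.dist_self, Nat.cast_zero, mul_zero]
      have h2 : a/3 + (((m+1:ℕ):ℝ)+n)/6 ≤ Bd a (((m+1:ℕ):ℝ)+n) := le_max_right _ _
      by_contra! hcon
      obtain ⟨h3, h4⟩ := hcon
      linarith
    have hwp1 : (0:ℝ) ≤ G.dist w p := by positivity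
    -- z step
    by_cases hZ : ∃ y, τ z (m+1) - 2 * G.dist z p ≤ τ y m - 2 * G.dist y p - 1
    swap
    · have hzp : z = p := by
        by_contra hne
        obtain ⟨y, -, hy⟩ := zstep hc hd m hne
        exact hZ ⟨y, hy⟩
      subst hzp
      left
      have hB1 : Bd a m - 1/2 ≤ Bd a ((m+1:ℕ):ℝ) := by
        have := Bd_shift a m 1 zero_le_one
        push_cast; linarith
      have hB1' : 0 ≤ Bd a ((m+1:ℕ):ℝ) := Bd_nonneg _ _ ha (by positivity)
      have hB2 := Bd_shift a ((m+1:ℕ):ℝ) n (by positivity)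
      suffices hs : τ z (m+1) - τ w (m+1) - 4 * G.dist w z ≤ Bd a ((m+1:ℕ):ℝ) by
        simp only [SimpleGraph.dist_self, Nat.cast_zero, mul_zero]
        linarith
      have hii : ∀ x, G.Adj z x → τ z (m+1) ≤ τ x m + 1 := by
        rcases hd.U1 z m with ⟨x, hx, h1⟩ | h1 | h1
        · exfalso
          apply hZ
          refine ⟨x, ?_⟩
          have := dist_adj hx.symm
          simp only [SimpleGraph.dist_self, Nat.cast_zero, mul_zero]
          linarith
        · exact h1
        · exfalso
          apply hZ
          exact ⟨z, by linarith⟩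
      obtain ⟨y, hy, h1⟩ := wstep hc hd m hwp
      by_cases hyz : y = z
      · have hadj := hy hyz
        have h2 := hii w hadj.symm
        have h3 := dist_adj hadj
        rcases hd.L2 w m with h4 | h4
        · have h5 := h4 z hadj
          rcases hd.U2 z m with h6 | h6
          · linarith
          · have h7 := h6 w hadj.symm
            have h8 := hn0 w z
            have := dist_symm (G := G) w z
            linarith
        · linarith
      · obtain ⟨x, hx, h2⟩ := dist_closer hc (Ne.symm hyz)
        have h3 := hii x hx
        have h4 := hn0 x y
        have := dist_symm (G := G) y x
        have := dist_symm (G := G) y z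
        linarith
    obtain ⟨y, hy⟩ := hZ
    have key : ∀ p' w' : V,
        τ z (m+1) - τ w (m+1) - 2 * G.dist z p - 4 * G.dist w p ≤
          τ y m - τ w' m - 2 * G.dist y p' - 4 * G.dist w' p' - 1/2 →
        τ p (m+1) - τ w (m+1) - 4 * G.dist w p ≤
          τ p' m - τ w' m - 4 * G.dist w' p' + 1/2 →
        τ z (m+1) - τ w (m+1) - 2 * G.dist z p - 4 * G.dist w p - (n:ℝ)/2
          ≤ Bd a (((m+1:ℕ):ℝ)+n) ∨
        τ p (m+1) - τ w (m+1) - 4 * G.dist w p + (n:ℝ)/2 ≤ Bd a (((m+1:ℕ):ℝ)+n) := by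
      intro p' w' h1 h2
      have h3 := ih (n+1) p' y w'
      have e : ((m:ℝ) + ((n+1:ℕ):ℝ)) = (((m+1:ℕ):ℝ)+n) := by push_cast; ring
      rw [e] at h3
      push_cast at h3 ⊢
      rcases h3 with h3 | h3
      · left; linarith
      · right; linarith
    obtain ⟨q, hq, hW⟩ := wstep hc hd m hwp
    rcases hd.U2 p m with hP | hP
    · exact key p q (by linarith) (by linarith)
    by_cases hqp : q = p
    · have hadj := hq hqp
      have h3 := dist_adj hadj
      rcases hd.L2 w m with h4 | h4
      · have h5 := h4 p hadj
        by_cases hyp : y = p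
        · left
          subst hyp
          simp only [SimpleGraph.dist_self, Nat.cast_zero, mul_zero] at hy
          have : (0:ℝ) ≤ n := by positivity
          linarith
        · obtain ⟨x, hx, h6⟩ := dist_closer hc (Ne.symm hyp)
          have h7 := hP x hx
          have h8 := dist_adj hx
          have := dist_symm (G := G) y x
          have := dist_symm (G := G) y p
          exact key x p (by linarith) (by linarith)
      · have h5 := hP w hadj.symm
        have h6 := dist_tri hc y p w
        have h7 := dist_symm (G := G) w p
        apply key w w <;> simp only [SimpleGraph.dist_self, Nat.cast_zero, mul_zero] <;> linarith
    · obtain ⟨x, hx, h6⟩ := dist_closer hc (Ne.symm hqp)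
      have h7 := hP x hx
      have h8 := dist_adj hx
      have h9 := dist_tri hc y p x
      have := dist_symm (G := G) q x
      have := dist_symm (G := G) q p
      exact key x q (by linarith) (by linarith)

lemma psi_bound (hc : G.Connected) (hd : Dyn G τ) (a : ℝ) (ha : 0 ≤ a) (l : ℕ)
    (h : ∀ v w, τ v l - τ w l - 2 * G.dist v w ≤ a) (m : ℕ) (v w : V) :
    τ v (l+m) - τ w (l+m) - 4 * G.dist v w ≤ max (a - (m:ℝ)/2) (a/3 + (m:ℝ)/6) := by
  have hd' : Dyn G (fun v k => τ v (l+k)) :=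
    ⟨fun v k => hd.U1 v (l+k), fun v k => hd.U2 v (l+k),
      fun v k => hd.L1 v (l+k), fun v k => hd.L2 v (l+k)⟩
  have := main_chain hc hd' a ha h m 0 v v w
  rw [dist_symm v w]
  simpa [Bd] using this

lemma late (hc : G.Connected) (hd : Dyn G τ) (D : ℕ) (hD : 1 ≤ D)
    (hdiam : ∀ v w : V, G.dist v w ≤ D) (l : ℕ)
    (h : ∀ v w, τ v l - τ w l - 2 * G.dist v w ≤ 6 * D) (m : ℕ) (hm : 4 * D ≤ m) (v w : V) :
    τ v (l+m) - τ w (l+m) - 4 * G.dist v w ≤ 4 * D := by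
  induction m using Nat.strong_induction_on generalizing v w with
  | _ m ih =>
    have hDr : (1:ℝ) ≤ D := by exact_mod_cast hD
    by_cases h12 : m ≤ 12 * D
    · refine (psi_bound hc hd (6*D) (by positivity) l h m v w).trans (max_le ?_ ?_)
      · have : (4:ℝ) * D ≤ m := by exact_mod_cast hm
        linarith
      · have : (m:ℝ) ≤ 12 * D := by exact_mod_cast h12
        linarith
    · obtain ⟨k, rfl⟩ : ∃ k, m = k + 4 * D := ⟨m - 4*D, by omega⟩
      have h1 := ih k (by omega) (by omega)
      have h2 : ∀ v w, τ v (l+k) - τ w (l+k) - 2 * G.dist v w ≤ 6 * D := by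
        intro v w
        have := h1 v w
        have h3 : (G.dist v w : ℝ) ≤ D := by exact_mod_cast hdiam v w
        linarith
      have h3 := psi_bound hc hd (6*D) (by positivity) (l+k) h2 (4*D) v w
      rw [add_assoc] at h3
      refine h3.trans (max_le ?_ ?_) <;> push_cast <;> linarith

lemma xi_of_psi (D : ℕ) (hdiam : ∀ v w : V, G.dist v w ≤ D) (l : ℕ) (b : ℝ)
    (h : ∀ v w, τ v l - τ w l - 4 * G.dist v w ≤ b) (v w : V) :
    τ v l - τ w l - 2 * G.dist v w ≤ b + 2 * D := by
  have := h v w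
  have h3 : (G.dist v w : ℝ) ≤ D := by exact_mod_cast hdiam v w
  linarith

lemma descend (hc : G.Connected) (hd : Dyn G τ) (D : ℕ) (hD : 1 ≤ D)
    (hdiam : ∀ v w : V, G.dist v w ≤ D) (k : ℕ) :
    ∀ (l : ℕ) (a : ℝ) (_ : 0 ≤ a) (_ : a ≤ 8 * D + 2 * D * k)
      (_ : ∀ v w, τ v l - τ w l - 2 * G.dist v w ≤ a) (m : ℕ) (_ : 4 * a ≤ m) (v w : V),
      τ v (l+m) - τ w (l+m) - 4 * G.dist v w ≤ 4 * D := by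
  have hDr : (1:ℝ) ≤ D := by exact_mod_cast hD
  have base : ∀ (l : ℕ) (a : ℝ) (_ : 0 ≤ a) (_ : a ≤ 8 * D)
      (_ : ∀ v w, τ v l - τ w l - 2 * G.dist v w ≤ a) (m : ℕ) (_ : 4 * a ≤ m) (v w : V),
      τ v (l+m) - τ w (l+m) - 4 * G.dist v w ≤ 4 * D := by
    intro l a ha hak h m hm v w
    by_cases h12 : m < 12 * D
    · have h12' : (m:ℝ) ≤ 12 * D := by exact_mod_cast h12.le
      exact (psi_bound hc hd a ha l h m v w).trans (max_le (by linarith) (by linarith))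
    · have h1 : ∀ v w, τ v (l+8*D) - τ w (l+8*D) - 4 * G.dist v w ≤ 4 * D := by
        intro v w
        refine (psi_bound hc hd a ha l h (8*D) v w).trans (max_le ?_ ?_) <;> push_cast <;> linarith
      have h2 : ∀ v w, τ v (l+8*D) - τ w (l+8*D) - 2 * G.dist v w ≤ 6 * D := by
        intro v w
        have := xi_of_psi D hdiam _ _ h1 v w
        linarith
      have h3 := late hc hd D hD hdiam (l+8*D) h2 (m - 8*D) (by omega) v w
      have e : l + 8*D + (m - 8*D) = l + m := by omega
      rwa [e] at h3
  induction k with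
  | zero =>
    intro l a ha hak
    exact base l a ha (by simpa using hak)
  | succ k ih =>
    intro l a ha hak h m hm v w
    by_cases ha8 : a ≤ 8 * D
    · exact base l a ha ha8 h m hm v w
    push Not at ha8
    have h1 : ∀ v w, τ v (l+8*D) - τ w (l+8*D) - 4 * G.dist v w ≤ a - 4 * D := by
      intro v w
      refine (psi_bound hc hd a ha l h (8*D) v w).trans (max_le ?_ ?_) <;> push_cast <;> linarith
    have h2 : ∀ v w, τ v (l+8*D) - τ w (l+8*D) - 2 * G.dist v w ≤ a - 2 * D := by
      intro v w
      have := xi_of_psi D hdiam _ _ h1 v w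
      linarith
    have h8 : 8 * D ≤ m := by
      have : ((8 * D : ℕ):ℝ) ≤ m := by push_cast; linarith
      exact_mod_cast this
    have h3 := ih (l+8*D) (a - 2*D) (by linarith) (by push_cast at hak; linarith) h2 (m - 8*D)
      (by rw [Nat.cast_sub h8]; push_cast; linarith) v w
    have e : l + 8*D + (m - 8*D) = l + m := by omega
    rwa [e] at h3

end aux


/-- The `tmax`/`tmin` over neighbours in the SC/FC/JC conditions are expressed
pointwise over the (nonempty) neighbourhood, which is equivalent. -/
theorem stmt8
    (ϑ u d Λ κ : ℝ)
    (hϑ : 1 < ϑ) (hu : 0 ≤ u) (hd : u ≤ d) (hΛ : d < Λ)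
    (hκ : κ = 2 * (u + (1 - 1/ϑ) * (Λ - d)))
    {V : Type*} [Fintype V] [Nonempty V]
    (G : SimpleGraph V) [DecidableRel G.Adj]
    (hconn : G.Connected) (hdeg : ∀ v : V, 2 ≤ G.degree v)
    (D : ℕ) (hD : 1 ≤ D) (hdiam : ∀ v w : V, G.dist v w ≤ D)
    (t : V → ℕ → ℝ) (C : V → ℕ → ℝ)
    (hDRIFT : ∀ (v : V) (ℓ : ℕ),
      d - u + (Λ - d - C v (ℓ+1)) / ϑ ≤ t v (ℓ+1) - t v ℓ ∧
      t v (ℓ+1) - t v ℓ ≤ Λ - C v (ℓ+1))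
    (hSC : ∀ (s : ℕ) (v : V) (ℓ : ℕ),
      (∀ w : V, G.Adj v w → C v (ℓ+1) / ϑ ≤ t v ℓ - t w ℓ + 4*(s:ℝ)*κ) ∨
      (∃ w : V, G.Adj v w ∧ C v (ℓ+1) / ϑ ≤ t v ℓ - t w ℓ - 4*(s:ℝ)*κ) ∨
      C v (ℓ+1) ≤ 0)
    (hFC : ∀ (s : ℕ), 1 ≤ s → ∀ (v : V) (ℓ : ℕ),
      (∃ w : V, G.Adj v w ∧ t v ℓ - t w ℓ + (4*(s:ℝ)-2)*κ + κ ≤ C v (ℓ+1)) ∨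
      (∀ w : V, G.Adj v w → t v ℓ - t w ℓ - (4*(s:ℝ)-2)*κ + κ ≤ C v (ℓ+1)) ∨
      κ ≤ C v (ℓ+1))
    (hJC : ∀ (v : V) (ℓ : ℕ),
      (κ < C v (ℓ+1)/ϑ ∧ ∀ w : V, G.Adj v w → C v (ℓ+1)/ϑ ≤ t v ℓ - t w ℓ - κ) ∨
      (C v (ℓ+1) < 0 ∧ ∀ w : V, G.Adj v w → t v ℓ - t w ℓ + κ ≤ C v (ℓ+1)) ∨
      (0 ≤ C v (ℓ+1)/ϑ ∧ C v (ℓ+1)/ϑ ≤ κ))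
    : ∀ ℓ : ℕ,
      ((ℓ:ℝ) < 4 * (⨆ p : V, ⨆ q : V, (t p 0 - t q 0 - 2*κ*(G.dist p q : ℝ))) / κ →
        ∀ v w : V, t v ℓ - t w ℓ - 4*κ*(G.dist v w : ℝ) ≤
          ⨆ p : V, ⨆ q : V, (t p 0 - t q 0 - 2*κ*(G.dist p q : ℝ))) ∧
      (4 * (⨆ p : V, ⨆ q : V, (t p 0 - t q 0 - 2*κ*(G.dist p q : ℝ))) / κ ≤ (ℓ:ℝ) →
        ∀ v w : V, t v ℓ - t w ℓ - 4*κ*(G.dist v w : ℝ) ≤ 4*κ*(D:ℝ)) := by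

  have hϑ0 : 0 < ϑ := by linarith
  have hinv : 1/ϑ < 1 := by rw [div_lt_one hϑ0]; exact hϑ
  have hκ0 : 0 < κ := by
    rw [hκ]
    have : 0 < (1 - 1/ϑ) * (Λ - d) := mul_pos (by linarith) (by linarith)
    linarith
  -- normalised drift
  have hlo : ∀ v l, t v l + Λ - κ/2 - C v (l+1) / ϑ ≤ t v (l+1) := by
    intro v l
    have h1 := (hDRIFT v l).1
    have e : d - u + (Λ - d - C v (l+1)) / ϑ = Λ - κ/2 - C v (l+1)/ϑ := by
      rw [hκ]; field_simp; ring
    linarith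
  have hhi : ∀ v l, t v (l+1) ≤ t v l + Λ - C v (l+1) := by
    intro v l
    have h1 := (hDRIFT v l).2
    linarith
  obtain ⟨τ, hτ⟩ : ∃ τ : V → ℕ → ℝ, ∀ v l, t v l = κ * τ v l + Λ * l :=
    ⟨fun v l => (t v l - Λ * l) / κ, fun v l => by field_simp; ring⟩
  have hle : ∀ a b : ℝ, κ * a ≤ κ * b → a ≤ b := fun a b h => le_of_mul_le_mul_left h hκ0
  have hd : Dyn G τ := by
    refine ⟨fun v l => ?_, fun v l => ?_, fun v l => ?_, fun v l => ?_⟩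
    · have h1 := hhi v l
      have h2 := hFC 1 le_rfl v l
      simp only [hτ] at h1 h2
      push_cast at h1 h2
      rcases h2 with ⟨x, hx, h2⟩ | h2 | h2
      · exact Or.inl ⟨x, hx, hle _ _ (by linarith)⟩
      · exact Or.inr (Or.inl fun x hx => hle _ _ (by have := h2 x hx; linarith))
      · exact Or.inr (Or.inr (hle _ _ (by linarith)))
    · have h1 := hhi v l
      have h2 := hJC v l
      simp only [hτ] at h1 h2
      push_cast at h1 h2
      rcases h2 with ⟨h2, -⟩ | ⟨-, h2⟩ | ⟨h2, -⟩
      · left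
        have : 0 < C v (l+1) := by
          by_contra! hcon
          have := div_nonpos_of_nonpos_of_nonneg hcon hϑ0.le
          linarith
        exact hle _ _ (by linarith)
      · exact Or.inr fun x hx => hle _ _ (by have := h2 x hx; linarith)
      · left
        have : 0 ≤ C v (l+1) := by
          by_contra! hcon
          have := div_neg_of_neg_of_pos hcon hϑ0
          linarith
        exact hle _ _ (by linarith)
    · have h1 := hlo v l
      have h2 := hSC 1 v l
      simp only [hτ] at h1 h2
      push_cast at h1 h2
      rcases h2 with h2 | ⟨x, hx, h2⟩ | h2
      · exact Or.inl fun x hx => hle _ _ (by have := h2 x hx; linarith)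
      · exact Or.inr (Or.inl ⟨x, hx, hle _ _ (by linarith)⟩)
      · have := div_nonpos_of_nonpos_of_nonneg h2 hϑ0.le
        exact Or.inr (Or.inr (hle _ _ (by linarith)))
    · have h1 := hlo v l
      have h2 := hJC v l
      simp only [hτ] at h1 h2
      push_cast at h1 h2
      rcases h2 with ⟨-, h2⟩ | ⟨h2, -⟩ | ⟨-, h2⟩
      · exact Or.inl fun x hx => hle _ _ (by have := h2 x hx; linarith)
      · have := div_neg_of_neg_of_pos h2 hϑ0
        exact Or.inr (hle _ _ (by linarith))
      · exact Or.inr (hle _ _ (by linarith))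
  obtain ⟨S, hS⟩ : ∃ S, S = ⨆ p : V, ⨆ q : V, (t p 0 - t q 0 - 2*κ*(G.dist p q : ℝ)) := ⟨_, rfl⟩
  have hSle : ∀ p q : V, t p 0 - t q 0 - 2*κ*(G.dist p q : ℝ) ≤ S := by
    intro p q
    rw [hS]
    refine le_trans ?_ (le_ciSup (Set.finite_range _).bddAbove p)
    exact le_ciSup (f := fun q : V => t p 0 - t q 0 - 2*κ*(G.dist p q : ℝ))
      (Set.finite_range _).bddAbove q
  rw [← hS]
  obtain ⟨a, rfl⟩ : ∃ a, S = κ * a := ⟨S/κ, by field_simp⟩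
  have h0 : ∀ v w, τ v 0 - τ w 0 - 2 * G.dist v w ≤ a := by
    intro v w
    have := hSle v w
    simp only [hτ] at this
    exact hle _ _ (by linarith)
  have ha : 0 ≤ a := by
    obtain ⟨v⟩ := ‹Nonempty V›
    simpa using h0 v v
  have e4 : 4 * (κ * a) / κ = 4 * a := by field_simp
  rw [e4]
  intro l
  refine ⟨fun hl v w => ?_, fun hl v w => ?_⟩
  · have h1 := psi_bound hconn hd a ha 0 h0 l v w
    rw [zero_add] at h1
    have hl0 : (0:ℝ) ≤ l := by positivity
    have h2 := h1.trans (max_le (c := a) (by linarith) (by linarith))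
    have h3 := mul_le_mul_of_nonneg_left h2 hκ0.le
    simp only [hτ]
    linarith
  · obtain ⟨k, hk⟩ := exists_nat_ge a
    have hDr : (1:ℝ) ≤ D := by exact_mod_cast hD
    have hk0 : (0:ℝ) ≤ k := by positivity
    have h1 := descend hconn hd D hD hdiam k 0 a ha (by nlinarith) h0 l hl v w
    rw [zero_add] at h1
    have h3 := mul_le_mul_of_nonneg_left h1 hκ0.le
    simp only [hτ]
    linarith
end

section
/- Under the standing assumptions, if L_0 ≤ 4κ, then Ψ^1(ℓ) ≤ 2κD for all ℓ ∈ ℕ. -/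
namespace GTrix

variable {V : Type*}

/-- full-speed candidate aimed at `c` -/
def FF (G : SimpleGraph V) (b : V → ℝ) (T m : ℝ) (c : V) (β : ℝ) : Prop :=
  ∃ (y : V) (A : ℝ), T ≤ b y - m + A ∧ A + 2 * (G.dist y c : ℝ) ≤ β

/-- waiting candidate on the stack -/
def WW (b : V → ℝ) (T : ℝ) (s : ℕ → V) (ρ : ℝ) (H r : ℕ) : Prop :=
  ∃ (r' : ℕ) (A : ℝ), r ≤ r' ∧ r' < H ∧ T ≤ b (s r') + A ∧ A ≤ ρ + 2 * (r : ℝ)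

def Inv (G : SimpleGraph V) (b : V → ℝ) (T S m : ℝ) : Prop :=
  ∃ (H : ℕ) (s : ℕ → V) (ρ : ℝ), 1 ≤ H ∧ (∀ i, i < H → G.Adj (s i) (s (i+1))) ∧
    b (s H) - m / 2 + (ρ + 4 * (H : ℝ)) ≤ S ∧ WW b T s ρ H 0 ∧
    ∀ r, 1 ≤ r → r ≤ H → FF G b T m (s r) (ρ + 2 * (r : ℝ)) ∨ WW b T s ρ H r

theorem exists_closer {G : SimpleGraph V} (hG : G.Connected) {y c : V} (h : y ≠ c) :
    ∃ x, G.Adj y x ∧ (G.dist x c : ℝ) + 1 ≤ G.dist y c := by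
  obtain ⟨p, hp⟩ := hG.exists_walk_length_eq_dist y c
  cases p with
  | nil => exact absurd rfl h
  | cons hadj q =>
    refine ⟨_, hadj, ?_⟩
    have := SimpleGraph.dist_le q
    rw [SimpleGraph.Walk.length_cons] at hp
    exact_mod_cast (by omega)

theorem dist_adj_le {G : SimpleGraph V} (hG : G.Connected) {y x : V} (c : V) (h : G.Adj y x) :
    (G.dist x c : ℝ) ≤ G.dist y c + 1 := by
  have h1 := hG.dist_triangle (u := x) (v := y) (w := c)
  have h2 : G.dist x y = 1 := SimpleGraph.dist_eq_one_iff_adj.2 h.symm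
  exact_mod_cast (by omega)

theorem dist_adj_le' {G : SimpleGraph V} (hG : G.Connected) {y x : V} (c : V) (h : G.Adj y x) :
    (G.dist c x : ℝ) ≤ G.dist c y + 1 := by
  have := dist_adj_le hG c h
  rwa [SimpleGraph.dist_comm, SimpleGraph.dist_comm (u := y)] at this

theorem FF_step {G : SimpleGraph V} (hG : G.Connected) {a b : V → ℝ} {T m : ℝ}
    (hY : ∀ p, b p ≤ a p - 1 ∨ (∃ x, G.Adj p x ∧ b p ≤ a x - 3) ∨ (∀ x, G.Adj p x → b p ≤ a x + 1))
    {c : V} {β : ℝ} (h : FF G b T m c β) :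
    FF G a T (m+1) c β ∨ ∃ A, T ≤ b c - m + A ∧ A ≤ β := by
  obtain ⟨y, A, h1, h2⟩ := h
  by_cases hyc : y = c
  · right
    subst hyc
    refine ⟨A, h1, ?_⟩
    simpa using h2
  left
  rcases hY y with h | ⟨x, hx, h⟩ | h
  · exact ⟨y, A, by linarith, h2⟩
  · exact ⟨x, A - 2, by linarith, by linarith [dist_adj_le hG c hx]⟩
  · obtain ⟨x, hx, hd⟩ := exists_closer hG hyc
    exact ⟨x, A + 2, by linarith [h x hx], by linarith⟩

theorem Inv_step {G : SimpleGraph V} (hG : G.Connected) {a b : V → ℝ} {T S m : ℝ} (hm : 0 ≤ m)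
    (hY : ∀ p, b p ≤ a p - 1 ∨ (∃ x, G.Adj p x ∧ b p ≤ a x - 3) ∨ (∀ x, G.Adj p x → b p ≤ a x + 1))
    (hY' : ∀ p, b p ≤ a p ∨ (∀ x, G.Adj p x → b p ≤ a x - 1))
    (hW : ∀ q, (∀ x, G.Adj q x → a x + 1/2 ≤ b q) ∨ (a q - 3/2 ≤ b q ∧
      (a q - 1/2 ≤ b q ∨ (∀ x, G.Adj q x → a x - 9/2 ≤ b q) ∨ (∃ x, G.Adj q x ∧ a x + 7/2 ≤ b q))))
    (hI : Inv G b T S m) : T - S ≤ (m+1)/2 ∨ Inv G a T S (m+1) := by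
  by_contra hcon
  rw [not_or] at hcon
  obtain ⟨hgoal, hno⟩ := hcon
  rw [not_le] at hgoal
  obtain ⟨H, s, ρ, hH, hs, hS, hW0, hc⟩ := hI
  have hHr : (1:ℝ) ≤ H := by exact_mod_cast hH
  -- normalized candidates
  have hc' : ∀ r, 1 ≤ r → r ≤ H → FF G a T (m+1) (s r) (ρ + 2 * (r : ℝ)) ∨ WW b T s ρ H r := by
    intro r hr1 hr2
    rcases hc r hr1 hr2 with h | h
    · rcases FF_step hG hY h with h | ⟨A, h1, h2⟩
      · exact Or.inl h
      · rcases hr2.lt_or_eq with h3 | h3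
        · exact Or.inr ⟨r, A, le_rfl, h3, by linarith, h2⟩
        · subst h3
          exfalso; linarith
    · exact Or.inr h
  have htop : FF G a T (m+1) (s H) (ρ + 2 * (H : ℝ)) := by
    rcases hc' H hH le_rfl with h | ⟨r', A, h1, h2, _⟩
    · exact h
    · omega
  have hcW : ∀ r, r ≤ H → 1 ≤ r ∨ WW b T s ρ H r := by
    intro r _
    rcases Nat.eq_zero_or_pos r with h | h
    · subst h; exact Or.inr hW0
    · exact Or.inl h
  rcases hW (s H) with hJ | ⟨hq, hst | ha | ⟨x, hx, hb⟩⟩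
  · -- jump
    obtain ⟨n, rfl⟩ : ∃ n, H = n + 1 := ⟨H - 1, by omega⟩
    have hadj : G.Adj (s (n+1)) (s n) := (hs n (by omega)).symm
    have hSn := hJ _ hadj
    push_cast at hS htop hHr
    have hstep : ∀ r, r < n → WW b T s ρ (n+1) r → WW a T s (ρ+5) n r := by
      rintro r hr ⟨r', A, h1, h2, h3, h4⟩
      have hrn : (r:ℝ) ≤ n := by exact_mod_cast hr.le
      have hr0 : (0:ℝ) ≤ r := Nat.cast_nonneg _
      have meet : ¬ (T ≤ a (s n) + A) := fun h => by linarith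
      rcases hY' (s r') with h | h
      · rcases (Nat.lt_succ_iff.1 h2).lt_or_eq with h5 | h5
        · exact ⟨r', A, h1, h5, by linarith, by linarith⟩
        · subst h5; exact absurd (by linarith) meet
      · rcases (Nat.lt_succ_iff.1 h2).lt_or_eq with h5 | h5
        · have h6 := h _ (hs r' (by omega))
          rcases (Nat.succ_le_of_lt h5).lt_or_eq with h7 | h7
          · exact ⟨r'+1, A, by omega, h7, by linarith, by linarith⟩
          · rw [show r' + 1 = n from h7] at h6; exact absurd (by linarith) meet
        · subst h5
          obtain ⟨k, rfl⟩ : ∃ k, r' = k + 1 := ⟨r' - 1, by omega⟩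
          have h6 := h _ (hs k (by omega)).symm
          exact ⟨k, A, by omega, by omega, by linarith, by linarith⟩
    rcases Nat.eq_zero_or_pos n with hn | hn
    · subst hn
      obtain ⟨r', A, -, h2, h3, h4⟩ := hW0
      obtain rfl : r' = 0 := by omega
      norm_num at h4 hS htop hJ hadj hc
      rcases hY' (s 0) with h | h
      · linarith
      have h6 := h _ hadj.symm
      -- lateral move
      have key : ∃ z, G.Adj (s 1) z ∧ FF G a T (m+1) z (ρ + 3) := by
        rcases hc 1 le_rfl le_rfl with ⟨y, B, h7, h8⟩ | ⟨r', _, h7, h8, _⟩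
        swap
        · omega
        norm_num at h8
        by_cases hy : y = s 1
        · subst hy
          simp at h8
          linarith
        have hgen : ∀ y' B', T ≤ a y' - (m+1) + B' → B' + 2 * (G.dist y' (s 1) : ℝ) ≤ ρ + 2 →
            (y' = s 1 → B' ≤ ρ) → ∃ z, G.Adj (s 1) z ∧ FF G a T (m+1) z (ρ + 3) := by
          intro y' B' h9 h10 h11
          by_cases hy' : y' = s 1
          · refine ⟨s 0, hadj, y', B', h9, ?_⟩
            have := dist_adj_le' hG y' hadj
            have h12 : (G.dist y' (s 1) : ℝ) = 0 := by rw [hy']; simp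
            linarith [h11 hy']
          · obtain ⟨z, hz, hd⟩ := exists_closer hG (Ne.symm hy')
            rw [SimpleGraph.dist_comm, SimpleGraph.dist_comm (u := s 1)] at hd
            exact ⟨z, hz, y', B', h9, by linarith⟩
        have hpos : (1:ℝ) ≤ G.dist y (s 1) := by
          have := hG.pos_dist_of_ne hy
          exact_mod_cast this
        rcases hY y with h | ⟨x, hx, h⟩ | h
        · exact hgen y B (by linarith) h8 (fun h => absurd h hy)
        · exact hgen x (B-2) (by linarith) (by linarith [dist_adj_le hG (s 1) hx])
            (fun _ => by linarith)
        · obtain ⟨x, hx, hd⟩ := exists_closer hG hy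
          by_cases hx1 : x = s 1
          · subst hx1
            rcases hY' y with h9 | h9
            · have := hJ y hx.symm
              linarith
            · have := h9 _ hx
              exact hgen (s 1) B (by linarith) (by simp; linarith) (fun _ => by linarith)
          · exact hgen x (B+2) (by linarith [h x hx]) (by linarith) (fun h => absurd h hx1)
      obtain ⟨z, hz, hF⟩ := key
      apply hno
      refine ⟨1, fun i => if i = 0 then s 1 else z, ρ + 1, le_rfl, ?_, ?_, ?_, ?_⟩
      · intro i hi
        obtain rfl : i = 0 := by omega
        simpa using hz
      · have := hJ z hz
        simp
        linarith
      · exact ⟨0, A, le_rfl, by omega, by simp; linarith, by simp; linarith⟩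
      · intro r hr1 hr2
        obtain rfl : r = 1 := by omega
        left
        simp
        convert hF using 1
        ring
    · have hn1 : (1:ℝ) ≤ n := by exact_mod_cast hn
      apply hno
      refine ⟨n, s, ρ + 5, hn, fun i hi => hs i (by omega), by linarith, hstep 0 hn hW0, ?_⟩
      intro r hr1 hr2
      rcases hr2.lt_or_eq with h | h
      · rcases hc' r hr1 (by omega) with ⟨y, A, h1, h2⟩ | h1
        · exact Or.inl ⟨y, A, h1, by linarith⟩
        · exact Or.inr (hstep r h h1)
      · subst h
        left
        obtain ⟨y, A, h1, h2⟩ := htop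
        exact ⟨y, A, h1, by linarith [dist_adj_le' hG y hadj]⟩
  · -- stay
    have hstep : ∀ r, r ≤ H → WW b T s ρ H r → WW a T s ρ H r := by
      rintro r hr ⟨r', A, h1, h2, h3, h4⟩
      have hrn : (r:ℝ) ≤ H := by exact_mod_cast hr
      rcases hY' (s r') with h | h
      · exact ⟨r', A, h1, h2, by linarith, h4⟩
      · have h6 := h _ (hs r' h2)
        rcases (Nat.succ_le_of_lt h2).lt_or_eq with h7 | h7
        · exact ⟨r'+1, A, by omega, h7, by linarith, h4⟩
        · rw [show r' + 1 = H from h7] at h6; exfalso; linarith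
    apply hno
    refine ⟨H, s, ρ, hH, hs, by linarith, hstep 0 (by omega) hW0, ?_⟩
    intro r hr1 hr2
    exact (hc' r hr1 hr2).imp id (hstep r hr2)
  · -- pop
    obtain ⟨n, rfl⟩ : ∃ n, H = n + 1 := ⟨H - 1, by omega⟩
    have hadj : G.Adj (s (n+1)) (s n) := (hs n (by omega)).symm
    have hSn := ha _ hadj
    push_cast at hS htop hHr
    have hstep : ∀ r, r ≤ n → WW b T s ρ (n+1) r → WW a T s ρ n r := by
      rintro r hr ⟨r', A, h1, h2, h3, h4⟩
      have hrn : (r:ℝ) ≤ n := by exact_mod_cast hr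
      have hr0 : (0:ℝ) ≤ r := Nat.cast_nonneg _
      have meet : ¬ (T ≤ a (s n) + A) := fun h => by linarith
      rcases hY' (s r') with h | h
      · rcases (Nat.lt_succ_iff.1 h2).lt_or_eq with h5 | h5
        · exact ⟨r', A, h1, h5, by linarith, by linarith⟩
        · subst h5; exact absurd (by linarith) meet
      · have h6 := h _ (hs r' (by omega))
        rcases (Nat.lt_succ_iff.1 h2).lt_or_eq with h5 | h5
        · rcases (Nat.succ_le_of_lt h5).lt_or_eq with h7 | h7
          · exact ⟨r'+1, A, by omega, h7, by linarith, by linarith⟩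
          · rw [show r' + 1 = n from h7] at h6; exact absurd (by linarith) meet
        · subst h5
          exfalso; linarith
    have hW0' := hstep 0 (by omega) hW0
    have hn : 1 ≤ n := by
      obtain ⟨r', A, h1, h2, _⟩ := hW0'
      omega
    apply hno
    refine ⟨n, s, ρ, hn, fun i hi => hs i (by omega), by linarith, hW0', ?_⟩
    intro r hr1 hr2
    exact (hc' r hr1 (by omega)).imp id (hstep r hr2)
  · -- push
    have hstep : ∀ r, r ≤ H → WW b T s ρ H r →
        WW a T (fun i => if i ≤ H then s i else x) ρ (H+1) r := by
      rintro r hr ⟨r', A, h1, h2, h3, h4⟩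
      rcases hY' (s r') with h | h
      · exact ⟨r', A, h1, by omega, by simp only [if_pos h2.le]; linarith, h4⟩
      · have h6 := h _ (hs r' h2)
        exact ⟨r'+1, A, by omega, by omega,
          by simp only [if_pos (show r' + 1 ≤ H from h2)]; linarith, h4⟩
    apply hno
    refine ⟨H+1, fun i => if i ≤ H then s i else x, ρ, by omega, ?_, ?_, hstep 0 (by omega) hW0, ?_⟩
    · intro i hi
      rcases (Nat.lt_succ_iff.1 hi).lt_or_eq with h | h
      · simp only [if_pos h.le, if_pos (show i + 1 ≤ H from h)]
        exact hs i h
      · subst h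
        simpa using hx
    · simp
      linarith
    · intro r hr1 hr2
      rcases hr2.lt_or_eq with h | h
      · have h' : r ≤ H := by omega
        simp only [if_pos h']
        exact (hc' r hr1 h').imp id (hstep r h')
      · subst h
        left
        obtain ⟨y, A, h1, h2⟩ := htop
        refine ⟨y, A, h1, ?_⟩
        simp
        linarith [dist_adj_le' hG y hx]

theorem Inv_init {G : SimpleGraph V} (hG : G.Connected) (b : V → ℝ) {v w : V} (h : v ≠ w) :
    Inv G b (b v) (b w + 4 * (G.dist v w : ℝ)) 0 := by
  obtain ⟨p, hp⟩ := hG.exists_walk_length_eq_dist v w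
  have hpos := hG.pos_dist_of_ne h
  refine ⟨G.dist v w, p.getVert, 0, hpos, ?_, ?_, ?_, ?_⟩
  · intro i hi
    exact p.adj_getVert_succ (by omega)
  · rw [← hp, p.getVert_length]
    linarith
  · exact ⟨0, 0, le_rfl, hpos, by simp, by simp⟩
  · intro r hr1 hr2
    left
    refine ⟨v, 0, by simp, ?_⟩
    have h1 : G.dist v (p.getVert r) ≤ r := by
      have := SimpleGraph.dist_le (p.take r)
      rw [SimpleGraph.Walk.take_length] at this
      omega
    have : (G.dist v (p.getVert r) : ℝ) ≤ r := by exact_mod_cast h1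
    linarith

theorem Inv_end {G : SimpleGraph V} {b : V → ℝ} {T S m D B : ℝ}
    (hD : ∀ v w, (G.dist v w : ℝ) ≤ D)
    (hB : ∀ v w, b v - b w - 4 * (G.dist v w : ℝ) ≤ B) (hBm : B ≤ m / 2)
    (hI : Inv G b T S m) : T - S ≤ 2 * D := by
  obtain ⟨H, s, ρ, hH, hs, hS, hW0, hc⟩ := hI
  have hHr : (1:ℝ) ≤ H := by exact_mod_cast hH
  rcases hc H hH le_rfl with ⟨y, A, h1, h2⟩ | ⟨r', A, h1, h2, _⟩
  · linarith [hD y (s H), hB y (s H)]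
  · omega

theorem main {G : SimpleGraph V} (hG : G.Connected) (D : ℕ) (hD : ∀ v w, G.dist v w ≤ D)
    (τ : ℕ → V → ℝ)
    (hY : ∀ ℓ p, τ (ℓ+1) p ≤ τ ℓ p - 1 ∨ (∃ x, G.Adj p x ∧ τ (ℓ+1) p ≤ τ ℓ x - 3) ∨
      (∀ x, G.Adj p x → τ (ℓ+1) p ≤ τ ℓ x + 1))
    (hY' : ∀ ℓ p, τ (ℓ+1) p ≤ τ ℓ p ∨ (∀ x, G.Adj p x → τ (ℓ+1) p ≤ τ ℓ x - 1))
    (hW : ∀ ℓ q, (∀ x, G.Adj q x → τ ℓ x + 1/2 ≤ τ (ℓ+1) q) ∨ (τ ℓ q - 3/2 ≤ τ (ℓ+1) q ∧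
      (τ ℓ q - 1/2 ≤ τ (ℓ+1) q ∨ (∀ x, G.Adj q x → τ ℓ x - 9/2 ≤ τ (ℓ+1) q) ∨
        (∃ x, G.Adj q x ∧ τ ℓ x + 7/2 ≤ τ (ℓ+1) q))))
    (h0 : ∀ v w, τ 0 v - τ 0 w - 4 * (G.dist v w : ℝ) ≤ 0) :
    ∀ ℓ v w, τ ℓ v - τ ℓ w - 4 * (G.dist v w : ℝ) ≤ 2 * (D : ℝ) := by
  have hD' : ∀ v w, (G.dist v w : ℝ) ≤ D := fun v w => by exact_mod_cast hD v w
  intro ℓ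
  induction ℓ using Nat.strong_induction_on with
  | _ ℓ ih =>
  intro v w
  by_cases hvw : v = w
  · subst hvw
    simp
  have hrun : ∀ m, m ≤ ℓ → m ≤ 4 * D →
      τ ℓ v - (τ ℓ w + 4 * (G.dist v w : ℝ)) ≤ 2 * (D:ℝ) ∨
      Inv G (τ (ℓ - m)) (τ ℓ v) (τ ℓ w + 4 * (G.dist v w : ℝ)) m := by
    intro m
    induction m with
    | zero => intro _ _; right; simpa using Inv_init hG (τ ℓ) hvw
    | succ m ihm =>
      intro h1 h2
      rcases ihm (by omega) (by omega) with h | h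
      · exact Or.inl h
      · obtain ⟨k, hk⟩ : ∃ k, ℓ - m = k + 1 := ⟨ℓ - m - 1, by omega⟩
        rw [hk] at h
        have hk' : ℓ - (m+1) = k := by omega
        rw [hk']
        rcases Inv_step hG (Nat.cast_nonneg m) (hY k) (hY' k) (hW k) h with h | h
        · left
          have : ((m:ℝ) + 1) ≤ 4 * D := by exact_mod_cast h2
          linarith
        · right
          push_cast
          exact h
  have hfin : τ ℓ v - (τ ℓ w + 4 * (G.dist v w : ℝ)) ≤ 2 * (D:ℝ) := by
    rcases le_total ℓ (4 * D) with h | h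
    · rcases hrun ℓ le_rfl h with h1 | h1
      · exact h1
      · rw [Nat.sub_self] at h1
        exact Inv_end hD' h0 (by positivity) h1
    · rcases hrun (4 * D) h le_rfl with h1 | h1
      · exact h1
      · rcases Nat.eq_zero_or_pos D with hD0 | hD0
        · have := hG.pos_dist_of_ne hvw
          have := hD v w
          omega
        · refine Inv_end hD' (ih (ℓ - 4 * D) (by omega)) ?_ h1
          push_cast
          linarith
  linarith

end GTrix



/-- The `tmax`/`tmin` over neighbours in the SC/FC/JC conditions are expressed
pointwise over the (nonempty) neighbourhood, which is equivalent. -/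
theorem stmt9
    (ϑ u d Λ κ : ℝ)
    (hϑ : 1 < ϑ) (hu : 0 ≤ u) (hd : u ≤ d) (hΛ : d < Λ)
    (hκ : κ = 2 * (u + (1 - 1/ϑ) * (Λ - d)))
    {V : Type*} [Fintype V] [Nonempty V]
    (G : SimpleGraph V) [DecidableRel G.Adj]
    (hconn : G.Connected) (hdeg : ∀ v : V, 2 ≤ G.degree v)
    (D : ℕ) (hD : 1 ≤ D) (hdiam : ∀ v w : V, G.dist v w ≤ D)
    (t : V → ℕ → ℝ) (C : V → ℕ → ℝ)
    (hDRIFT : ∀ (v : V) (ℓ : ℕ),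
      d - u + (Λ - d - C v (ℓ+1)) / ϑ ≤ t v (ℓ+1) - t v ℓ ∧
      t v (ℓ+1) - t v ℓ ≤ Λ - C v (ℓ+1))
    (hSC : ∀ (s : ℕ) (v : V) (ℓ : ℕ),
      (∀ w : V, G.Adj v w → C v (ℓ+1) / ϑ ≤ t v ℓ - t w ℓ + 4*(s:ℝ)*κ) ∨
      (∃ w : V, G.Adj v w ∧ C v (ℓ+1) / ϑ ≤ t v ℓ - t w ℓ - 4*(s:ℝ)*κ) ∨
      C v (ℓ+1) ≤ 0)
    (hFC : ∀ (s : ℕ), 1 ≤ s → ∀ (v : V) (ℓ : ℕ),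
      (∃ w : V, G.Adj v w ∧ t v ℓ - t w ℓ + (4*(s:ℝ)-2)*κ + κ ≤ C v (ℓ+1)) ∨
      (∀ w : V, G.Adj v w → t v ℓ - t w ℓ - (4*(s:ℝ)-2)*κ + κ ≤ C v (ℓ+1)) ∨
      κ ≤ C v (ℓ+1))
    (hJC : ∀ (v : V) (ℓ : ℕ),
      (κ < C v (ℓ+1)/ϑ ∧ ∀ w : V, G.Adj v w → C v (ℓ+1)/ϑ ≤ t v ℓ - t w ℓ - κ) ∨
      (C v (ℓ+1) < 0 ∧ ∀ w : V, G.Adj v w → t v ℓ - t w ℓ + κ ≤ C v (ℓ+1)) ∨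
      (0 ≤ C v (ℓ+1)/ϑ ∧ C v (ℓ+1)/ϑ ≤ κ))
    (hL0 : ∀ v w : V, G.Adj v w → |t v 0 - t w 0| ≤ 4*κ) :
    ∀ (ℓ : ℕ) (v w : V), t v ℓ - t w ℓ - 4*κ*(G.dist v w : ℝ) ≤ 2*κ*(D:ℝ) := by
  have hϑ0 : 0 < ϑ := by linarith
  have h1ϑ : 1 / ϑ < 1 := by rw [div_lt_one hϑ0]; exact hϑ
  have hκ0 : 0 < κ := by
    rw [hκ]
    have : 0 < (1 - 1/ϑ) * (Λ - d) := mul_pos (by linarith) (by linarith)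
    linarith
  -- drift in nominal form
  have hlow : ∀ v ℓ, t v ℓ + Λ - κ/2 - C v (ℓ+1) / ϑ ≤ t v (ℓ+1) := by
    intro v ℓ
    have h := (hDRIFT v ℓ).1
    have e : d - u + (Λ - d - C v (ℓ+1)) / ϑ = Λ - κ/2 - C v (ℓ+1)/ϑ := by
      rw [hκ]; field_simp; ring
    linarith
  have hup : ∀ v ℓ, t v (ℓ+1) ≤ t v ℓ + Λ - C v (ℓ+1) := by
    intro v ℓ
    linarith [(hDRIFT v ℓ).2]
  -- comparison of normalized quantities
  have cmp : ∀ (ℓ : ℕ) (p x : V) (c : ℝ), t p (ℓ+1) ≤ t x ℓ + Λ + c * κ →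
      (t p (ℓ+1) - Λ * ((ℓ+1 : ℕ):ℝ)) / κ ≤ (t x ℓ - Λ * (ℓ:ℝ)) / κ + c := by
    intro ℓ p x c h
    rw [div_add' _ _ _ hκ0.ne', div_le_div_iff_of_pos_right hκ0]
    push_cast
    linarith
  have cmp' : ∀ (ℓ : ℕ) (p x : V) (c : ℝ), t x ℓ + Λ + c * κ ≤ t p (ℓ+1) →
      (t x ℓ - Λ * (ℓ:ℝ)) / κ + c ≤ (t p (ℓ+1) - Λ * ((ℓ+1 : ℕ):ℝ)) / κ := by
    intro ℓ p x c h
    rw [div_add' _ _ _ hκ0.ne', div_le_div_iff_of_pos_right hκ0]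
    push_cast
    linarith
  have hL : ∀ (n : ℕ) (v w : V), G.dist v w = n → t v 0 - t w 0 ≤ 4 * κ * (n:ℝ) := by
    intro n
    induction n with
    | zero =>
      intro v w h
      have : v = w := (hconn.dist_eq_zero_iff).1 h
      subst this
      simp
    | succ n ih =>
      intro v w h
      have hne : v ≠ w := by
        rintro rfl
        simp at h
      obtain ⟨p, hp⟩ := hconn.exists_walk_length_eq_dist v w
      cases p with
      | nil => exact absurd rfl hne
      | cons hadj q =>
        rename_i x
        rw [SimpleGraph.Walk.length_cons] at hp
        have h1 := SimpleGraph.dist_le q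
        have h2 := hconn.dist_triangle (u := v) (v := x) (w := w)
        have h3 : G.dist v x = 1 := SimpleGraph.dist_eq_one_iff_adj.2 hadj
        have h4 := ih x w (by omega)
        have h5 := (abs_le.1 (hL0 v x hadj)).2
        push_cast
        linarith
  have key := GTrix.main hconn D hdiam (fun ℓ v => (t v ℓ - Λ * (ℓ:ℝ)) / κ) ?_ ?_ ?_ ?_
  · intro ℓ v w
    have h := key ℓ v w
    have e : (t v ℓ - Λ * (ℓ:ℝ)) / κ - (t w ℓ - Λ * (ℓ:ℝ)) / κ = (t v ℓ - t w ℓ) / κ := by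
      rw [← sub_div]; congr 1; ring
    simp only [e] at h
    have h' : (t v ℓ - t w ℓ) / κ ≤ 2 * (D:ℝ) + 4 * (G.dist v w : ℝ) := by linarith
    rw [div_le_iff₀ hκ0] at h'
    linarith
  · intro ℓ p
    have hu' := hup p ℓ
    rcases hFC 1 le_rfl p ℓ with ⟨x, hx, h⟩ | h | h
    · right; left
      refine ⟨x, hx, ?_⟩
      have := cmp ℓ p x (-3) (by push_cast at h; linarith)
      linarith
    · right; right
      intro x hx
      have h := h x hx
      exact cmp ℓ p x 1 (by push_cast at h; linarith)
    · left
      have := cmp ℓ p p (-1) (by linarith)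
      linarith
  · intro ℓ p
    have hu' := hup p ℓ
    have hpos : 0 ≤ C p (ℓ+1) / ϑ → 0 ≤ C p (ℓ+1) := by
      intro h
      by_contra hn
      have := div_neg_of_neg_of_pos (not_le.1 hn) hϑ0
      linarith
    rcases hJC p ℓ with ⟨h, -⟩ | ⟨-, h⟩ | ⟨h, -⟩
    · left
      have := cmp ℓ p p 0 (by linarith [hpos (by linarith)])
      linarith
    · right
      intro x hx
      have := cmp ℓ p x (-1) (by linarith [h x hx])
      linarith
    · left
      have := cmp ℓ p p 0 (by linarith [hpos h])
      linarith
  · intro ℓ q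
    have hl := hlow q ℓ
    have hrest : C q (ℓ+1) / ϑ ≤ κ → _ := fun h => Or.inr (a := ∀ x, G.Adj q x →
        (t x ℓ - Λ * (ℓ:ℝ)) / κ + 1/2 ≤ (t q (ℓ+1) - Λ * ((ℓ+1 : ℕ):ℝ)) / κ) (by
      refine (⟨?_, ?_⟩ : ((t q ℓ - Λ * (ℓ:ℝ)) / κ - 3/2 ≤ (t q (ℓ+1) - Λ * ((ℓ+1 : ℕ):ℝ)) / κ) ∧
        ((t q ℓ - Λ * (ℓ:ℝ)) / κ - 1/2 ≤ (t q (ℓ+1) - Λ * ((ℓ+1 : ℕ):ℝ)) / κ ∨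
         (∀ x, G.Adj q x → (t x ℓ - Λ * (ℓ:ℝ)) / κ - 9/2 ≤ (t q (ℓ+1) - Λ * ((ℓ+1 : ℕ):ℝ)) / κ) ∨
         (∃ x, G.Adj q x ∧ (t x ℓ - Λ * (ℓ:ℝ)) / κ + 7/2 ≤ (t q (ℓ+1) - Λ * ((ℓ+1 : ℕ):ℝ)) / κ)))
      · have := cmp' ℓ q q (-(3/2)) (by linarith)
        linarith
      · rcases hSC 1 q ℓ with h1 | ⟨x, hx, h1⟩ | h1
        · right; left
          intro x hx
          have h1 := h1 x hx
          push_cast at h1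
          have := cmp' ℓ q x (-(9/2)) (by linarith)
          linarith
        · right; right
          push_cast at h1
          exact ⟨x, hx, cmp' ℓ q x (7/2) (by linarith)⟩
        · left
          have h2 : C q (ℓ+1) / ϑ ≤ 0 := div_nonpos_of_nonpos_of_nonneg h1 hϑ0.le
          have := cmp' ℓ q q (-(1/2)) (by linarith)
          linarith)
    rcases hJC q ℓ with ⟨-, h⟩ | ⟨h, -⟩ | ⟨-, h⟩
    · left
      intro x hx
      exact cmp' ℓ q x (1/2) (by linarith [h x hx])
    · have h2 : C q (ℓ+1) / ϑ ≤ 0 := div_nonpos_of_nonpos_of_nonneg h.le hϑ0.le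
      exact hrest (by linarith)
    · exact hrest h
  · intro v w
    have h := hL _ v w rfl
    have e : (t v 0 - Λ * ((0:ℕ):ℝ)) / κ - (t w 0 - Λ * ((0:ℕ):ℝ)) / κ = (t v 0 - t w 0) / κ := by
      rw [← sub_div]; congr 1; ring
    simp only [e]
    have h' : (t v 0 - t w 0) / κ ≤ 4 * (G.dist v w : ℝ) := by
      rw [div_le_iff₀ hκ0]; linarith
    linarith
end

section
/- Under the standing assumptions, let s ≥ 1 be an integer and Ψ a real with Ψ^{s−1}(ℓ) ≤ Ψ for all ℓ ∈ ℕ. Then for every ℓ ∈ ℕ: if ℓ < Ψ/κ then Ψ^s(ℓ) ≤ Ξ^s(0) + Ψ/2, and if ℓ ≥ Ψ/κ then Ψ^s(ℓ) ≤ Ψ/2. -/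
/-- A neighbour of `a` that is one step closer to `x`. -/
lemma aux_closer {V : Type*} (G : SimpleGraph V) (hconn : G.Connected) (a x : V) (h : a ≠ x) :
    ∃ b, G.Adj a b ∧ (G.dist a x : ℝ) = (G.dist b x : ℝ) + 1 := by
  obtain ⟨p, hp⟩ := hconn.exists_walk_length_eq_dist a x
  cases p with
  | nil => exact absurd rfl h
  | cons hadj q =>
    rename_i b
    refine ⟨b, hadj, ?_⟩
    have h1 : G.dist b x ≤ q.length := SimpleGraph.dist_le q
    have h2 : G.dist a x ≤ G.dist a b + G.dist b x := hconn.dist_triangle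
    have h3 : G.dist a b = 1 := SimpleGraph.dist_eq_one_iff_adj.mpr hadj
    simp only [SimpleGraph.Walk.length_cons] at hp
    have : G.dist a x = G.dist b x + 1 := by omega
    exact_mod_cast this

lemma aux_adj_le {V : Type*} (G : SimpleGraph V) (hconn : G.Connected) (a b x : V)
    (h : G.Adj a b) : (G.dist b x : ℝ) ≤ (G.dist a x : ℝ) + 1 := by
  have h2 : G.dist b x ≤ G.dist b a + G.dist a x := hconn.dist_triangle
  have h3 : G.dist b a = 1 := SimpleGraph.dist_eq_one_iff_adj.mpr h.symm
  have : G.dist b x ≤ G.dist a x + 1 := by omega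
  exact_mod_cast this

/-- One backward step of the (anchor, late node, early node) trace. -/
lemma aux_step {V : Type*} (G : SimpleGraph V) (hconn : G.Connected)
    (κ Λ σ P c : ℝ) (hκ : 0 < κ) (hσ : 4 * κ ≤ σ) (hc : 0 ≤ c) (T T' : V → ℝ)
    (hS : ∀ v, (∀ w, G.Adj v w → T w + Λ - κ/2 - σ ≤ T' v) ∨
      (∃ w, G.Adj v w ∧ T w + Λ - κ/2 + σ ≤ T' v) ∨ T v + Λ - κ/2 ≤ T' v)
    (hF : ∀ v, (∃ w, G.Adj v w ∧ T' v ≤ T w + Λ - κ - (σ - 2*κ)) ∨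
      (∀ w, G.Adj v w → T' v ≤ T w + Λ - κ + (σ - 2*κ)) ∨ T' v ≤ T v + Λ - κ)
    (hU : ∀ v, T' v ≤ T v + Λ ∨ ∀ w, G.Adj v w → T' v ≤ T w + Λ - κ)
    (hL : ∀ v, T v + Λ - 3*κ/2 ≤ T' v ∨ ∀ w, G.Adj v w → T w + Λ + κ/2 ≤ T' v)
    (a p x : V) (hax : a ≠ x)
    (h1 : P ≤ T' p - T' x - (σ - 2*κ) * (G.dist p a : ℝ) - σ * (G.dist a x : ℝ) - c)
    (h2 : P ≤ T' a - T' x - σ * (G.dist a x : ℝ) + c) :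
    P ≤ c + κ/2 ∨ ∃ a p x : V,
      P ≤ T p - T x - (σ - 2*κ) * (G.dist p a : ℝ) - σ * (G.dist a x : ℝ) - (c + κ/2) ∧
      P ≤ T a - T x - σ * (G.dist a x : ℝ) + (c + κ/2) := by
  have hτ : 0 ≤ σ - 2*κ := by linarith
  have hσ0 : 0 ≤ σ := by linarith
  -- the early node
  have hx : ∃ x1, (x1 = x ∨ G.Adj x x1) ∧
      T x1 + σ * (G.dist a x1 : ℝ) ≤ T' x + σ * (G.dist a x : ℝ) - Λ + κ/2 := by
    rcases hS x with h | ⟨w, hw, h⟩ | h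
    · obtain ⟨b, hb, hd⟩ := aux_closer G hconn x a hax.symm
      refine ⟨b, Or.inr hb, ?_⟩
      have := h b hb
      rw [G.dist_comm (u := a) (v := b), G.dist_comm (u := a) (v := x), hd]
      linarith
    · refine ⟨w, Or.inr hw, ?_⟩
      have hd := aux_adj_le G hconn x w a hw
      rw [G.dist_comm (u := a) (v := w), G.dist_comm (u := a) (v := x)]
      have := mul_le_mul_of_nonneg_left hd hσ0
      linarith
    · exact ⟨x, Or.inl rfl, by linarith⟩
  -- the late node
  have hp : (∃ p1, T' p - (σ - 2*κ) * (G.dist p a : ℝ) ≤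
        T p1 - (σ - 2*κ) * (G.dist p1 a : ℝ) + Λ - κ) ∨
      (p = a ∧ ∀ w, G.Adj a w → T' a ≤ T w + Λ - κ + (σ - 2*κ)) := by
    rcases hF p with ⟨w, hw, h⟩ | h | h
    · left
      refine ⟨w, ?_⟩
      have := mul_le_mul_of_nonneg_left (aux_adj_le G hconn p w a hw) hτ
      linarith
    · by_cases hpa : p = a
      · right
        subst hpa
        exact ⟨rfl, h⟩
      · left
        obtain ⟨b, hb, hd⟩ := aux_closer G hconn p a hpa
        refine ⟨b, ?_⟩
        have := h b hb
        rw [hd]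
        linarith
    · exact Or.inl ⟨p, by linarith⟩
  obtain ⟨x1, hx1, hx1'⟩ := hx
  by_cases hxa : x1 = a
  · subst hxa
    have hd0 : (G.dist x1 x1 : ℝ) = 0 := by simp
    rw [hd0] at hx1'
    have hadj : G.Adj x x1 := by
      rcases hx1 with h | h
      · exact absurd h hax
      · exact h
    have hd1 : (G.dist x1 x : ℝ) = 1 := by
      exact_mod_cast SimpleGraph.dist_eq_one_iff_adj.mpr hadj.symm
    have hd1' : (G.dist x x1 : ℝ) = 1 := by
      exact_mod_cast SimpleGraph.dist_eq_one_iff_adj.mpr hadj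
    rw [hd1] at h1 h2 hx1'
    rcases hU x1 with hu | hu
    · left; linarith
    · have hux := hu x hadj.symm
      rcases hL x with hl | hl
      · left; linarith
      · have hl1 := hl x1 hadj
        rcases hp with ⟨p1, hp1⟩ | ⟨rfl, _⟩
        · by_cases hpa : p1 = x1
          · subst hpa
            rw [hd0] at hp1
            left; linarith
          · right
            obtain ⟨b, hb, hd⟩ := aux_closer G hconn x1 p1 (Ne.symm hpa)
            have hbx : (G.dist b x1 : ℝ) = 1 := by
              exact_mod_cast SimpleGraph.dist_eq_one_iff_adj.mpr hb.symm
            have hub := hu b hb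
            refine ⟨b, p1, x1, ?_, ?_⟩
            · rw [hbx, G.dist_comm (u := p1) (v := b)]
              rw [G.dist_comm (u := p1) (v := x1), hd] at hp1
              linarith
            · rw [hbx]; linarith
        · right
          refine ⟨x, x, p, ?_, ?_⟩
          · rw [hd1']
            simp only [SimpleGraph.dist_self, Nat.cast_zero] at h1 ⊢
            linarith
          · rw [hd1']; linarith
  · right
    obtain ⟨b, hb, hd⟩ := aux_closer G hconn a x1 (Ne.symm hxa)
    rcases hp with ⟨p1, hp1⟩ | ⟨rfl, hpe⟩
    · rcases hU a with hu | hu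
      · exact ⟨a, p1, x1, by linarith, by linarith⟩
      · have hub := hu b hb
        refine ⟨b, p1, x1, ?_, ?_⟩
        · have h3 := aux_adj_le G hconn a b p1 hb
          rw [G.dist_comm (u := b) (v := p1), G.dist_comm (u := a) (v := p1)] at h3
          have := mul_le_mul_of_nonneg_left h3 hτ
          rw [hd] at hx1'
          linarith
        · rw [hd] at hx1'
          linarith
    · have hub := hpe b hb
      rw [hd] at hx1'
      refine ⟨b, b, x1, ?_, ?_⟩
      · simp only [SimpleGraph.dist_self, Nat.cast_zero] at h1 ⊢
        linarith
      · linarith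

/-- The `tmax`/`tmin` over neighbours in the SC/FC/JC conditions are expressed
pointwise over the (nonempty) neighbourhood, which is equivalent. -/
theorem stmt11
    (ϑ u d Λ κ : ℝ)
    (hϑ : 1 < ϑ) (hu : 0 ≤ u) (hd : u ≤ d) (hΛ : d < Λ)
    (hκ : κ = 2 * (u + (1 - 1/ϑ) * (Λ - d)))
    {V : Type*} [Fintype V] [Nonempty V]
    (G : SimpleGraph V) [DecidableRel G.Adj]
    (hconn : G.Connected) (hdeg : ∀ v : V, 2 ≤ G.degree v)
    (D : ℕ) (hD : 1 ≤ D) (hdiam : ∀ v w : V, G.dist v w ≤ D)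
    (t : V → ℕ → ℝ) (C : V → ℕ → ℝ)
    (hDRIFT : ∀ (v : V) (ℓ : ℕ),
      d - u + (Λ - d - C v (ℓ+1)) / ϑ ≤ t v (ℓ+1) - t v ℓ ∧
      t v (ℓ+1) - t v ℓ ≤ Λ - C v (ℓ+1))
    (hSC : ∀ (s : ℕ) (v : V) (ℓ : ℕ),
      (∀ w : V, G.Adj v w → C v (ℓ+1) / ϑ ≤ t v ℓ - t w ℓ + 4*(s:ℝ)*κ) ∨
      (∃ w : V, G.Adj v w ∧ C v (ℓ+1) / ϑ ≤ t v ℓ - t w ℓ - 4*(s:ℝ)*κ) ∨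
      C v (ℓ+1) ≤ 0)
    (hFC : ∀ (s : ℕ), 1 ≤ s → ∀ (v : V) (ℓ : ℕ),
      (∃ w : V, G.Adj v w ∧ t v ℓ - t w ℓ + (4*(s:ℝ)-2)*κ + κ ≤ C v (ℓ+1)) ∨
      (∀ w : V, G.Adj v w → t v ℓ - t w ℓ - (4*(s:ℝ)-2)*κ + κ ≤ C v (ℓ+1)) ∨
      κ ≤ C v (ℓ+1))
    (hJC : ∀ (v : V) (ℓ : ℕ),
      (κ < C v (ℓ+1)/ϑ ∧ ∀ w : V, G.Adj v w → C v (ℓ+1)/ϑ ≤ t v ℓ - t w ℓ - κ) ∨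
      (C v (ℓ+1) < 0 ∧ ∀ w : V, G.Adj v w → t v ℓ - t w ℓ + κ ≤ C v (ℓ+1)) ∨
      (0 ≤ C v (ℓ+1)/ϑ ∧ C v (ℓ+1)/ϑ ≤ κ))
    (s : ℕ) (hs : 1 ≤ s) (Ψ : ℝ)
    (hΨ : ∀ (ℓ : ℕ) (v w : V),
      t v ℓ - t w ℓ - 4*((s:ℝ)-1)*κ*(G.dist v w : ℝ) ≤ Ψ) :
    ∀ ℓ : ℕ,
      ((ℓ:ℝ) < Ψ/κ →
        ∀ v w : V, t v ℓ - t w ℓ - 4*(s:ℝ)*κ*(G.dist v w : ℝ) ≤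
          (⨆ p : V, ⨆ q : V, (t p 0 - t q 0 - (4*(s:ℝ)-2)*κ*(G.dist p q : ℝ))) + Ψ/2) ∧
      (Ψ/κ ≤ (ℓ:ℝ) →
        ∀ v w : V, t v ℓ - t w ℓ - 4*(s:ℝ)*κ*(G.dist v w : ℝ) ≤ Ψ/2) := by
  have hϑ0 : 0 < ϑ := by linarith
  have hinv : 1/ϑ < 1 := by rw [div_lt_one hϑ0]; exact hϑ
  have hκ0 : 0 < κ := by
    have : 0 < (1 - 1/ϑ) * (Λ - d) := mul_pos (by linarith) (by linarith)
    rw [hκ]; linarith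
  have hs1 : (1:ℝ) ≤ s := by exact_mod_cast hs
  have hσ : 4 * κ ≤ 4*(s:ℝ)*κ := by nlinarith
  have hup : ∀ v ℓ, t v (ℓ+1) ≤ t v ℓ + Λ - C v (ℓ+1) := fun v ℓ => by
    linarith [(hDRIFT v ℓ).2]
  have hlow : ∀ v ℓ, t v ℓ + Λ - κ/2 - C v (ℓ+1)/ϑ ≤ t v (ℓ+1) := fun v ℓ => by
    have h := (hDRIFT v ℓ).1
    have e : (Λ - d - C v (ℓ+1)) / ϑ = (1/ϑ) * (Λ - d) - C v (ℓ+1)/ϑ := by ring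
    rw [e] at h
    rw [hκ]
    linarith
  have hdivneg : ∀ c : ℝ, c ≤ 0 → c/ϑ ≤ 0 := fun c hc => div_nonpos_of_nonpos_of_nonneg hc hϑ0.le
  have hdivpos : ∀ c : ℝ, 0 ≤ c/ϑ → 0 ≤ c := fun c hc => by
    by_contra hneg
    have := div_neg_of_neg_of_pos (not_le.mp hneg) hϑ0
    linarith
  have key : ∀ (ℓ1 : ℕ) (v w : V) (m : ℕ), m ≤ ℓ1 →
      t v ℓ1 - t w ℓ1 - 4*(s:ℝ)*κ*(G.dist v w : ℝ) ≤ (m:ℝ)*κ/2 ∨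
      ∃ a p x : V, a ≠ x ∧
        t v ℓ1 - t w ℓ1 - 4*(s:ℝ)*κ*(G.dist v w : ℝ) ≤
          t p (ℓ1-m) - t x (ℓ1-m) - (4*(s:ℝ)*κ - 2*κ) * (G.dist p a : ℝ)
            - 4*(s:ℝ)*κ * (G.dist a x : ℝ) - (m:ℝ)*κ/2 ∧
        t v ℓ1 - t w ℓ1 - 4*(s:ℝ)*κ*(G.dist v w : ℝ) ≤
          t a (ℓ1-m) - t x (ℓ1-m) - 4*(s:ℝ)*κ * (G.dist a x : ℝ) + (m:ℝ)*κ/2 := by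
    intro ℓ1 v w m
    induction m with
    | zero =>
      intro _
      by_cases hvw : v = w
      · left; subst hvw; simp
      · right
        exact ⟨v, v, w, hvw, by simp, by simp⟩
    | succ m ih =>
      intro hm
      rcases ih (by omega) with h | ⟨a, p, x, hax, h1, h2⟩
      · left; push_cast; linarith
      · obtain ⟨ℓ, hℓ⟩ : ∃ ℓ, ℓ1 - m = ℓ + 1 := ⟨ℓ1 - m - 1, by omega⟩
        have hℓ' : ℓ1 - (m+1) = ℓ := by omega
        rw [hℓ] at h1 h2
        rw [hℓ']
        have hstep := aux_step G hconn κ Λ (4*(s:ℝ)*κ)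
          (t v ℓ1 - t w ℓ1 - 4*(s:ℝ)*κ*(G.dist v w : ℝ)) ((m:ℝ)*κ/2) hκ0 hσ
          (by positivity) (fun v => t v ℓ) (fun v => t v (ℓ+1))
          (fun v => by
            have hl := hlow v ℓ
            rcases hSC s v ℓ with h | ⟨w, hw, h⟩ | h
            · left; intro w hw; have := h w hw; linarith
            · right; left; exact ⟨w, hw, by linarith⟩
            · right; right; have := hdivneg _ h; linarith)
          (fun v => by
            have hl := hup v ℓ
            rcases hFC s hs v ℓ with ⟨w, hw, h⟩ | h | h
            · left; exact ⟨w, hw, by linarith⟩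
            · right; left; intro w hw; have := h w hw; linarith
            · right; right; linarith)
          (fun v => by
            have hl := hup v ℓ
            rcases hJC v ℓ with ⟨h, _⟩ | ⟨_, h⟩ | ⟨h, _⟩
            · left; have := hdivpos _ (by linarith : 0 ≤ C v (ℓ+1)/ϑ); linarith
            · right; intro w hw; have := h w hw; linarith
            · left; have := hdivpos _ h; linarith)
          (fun v => by
            have hl := hlow v ℓ
            rcases hJC v ℓ with ⟨_, h⟩ | ⟨h, _⟩ | ⟨_, h⟩
            · right; intro w hw; have := h w hw; linarith
            · left; have := hdivneg _ h.le; linarith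
            · left; linarith)
          a p x hax h1 h2
        rcases hstep with h | ⟨a', p', x', h1', h2'⟩
        · left; push_cast; linarith
        · by_cases hax' : a' = x'
          · left
            subst hax'
            simp only [SimpleGraph.dist_self, Nat.cast_zero] at h2'
            push_cast; linarith
          · right
            exact ⟨a', p', x', hax', by push_cast; linarith, by push_cast; linarith⟩
  -- from a state to a bound by `ξ`
  have hξ : ∀ a p x : V, a ≠ x →
      - (4*(s:ℝ)*κ - 2*κ) * (G.dist p a : ℝ) - 4*(s:ℝ)*κ * (G.dist a x : ℝ) ≤
      - (4*(s:ℝ)-2)*κ * (G.dist p x : ℝ) - 2*κ := by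
    intro a p x hax
    have htri : (G.dist p x : ℝ) ≤ G.dist p a + G.dist a x := by
      exact_mod_cast hconn.dist_triangle
    have hpos : (1:ℝ) ≤ G.dist a x := by
      exact_mod_cast hconn.pos_dist_of_ne hax
    have e1 := mul_le_mul_of_nonneg_left htri (by linarith : 0 ≤ 4*(s:ℝ)*κ - 2*κ)
    have e2 := mul_le_mul_of_nonneg_left hpos (by linarith : 0 ≤ 2*κ)
    linarith
  have hΨ0 : 0 ≤ Ψ := by
    obtain ⟨v⟩ := ‹Nonempty V›
    simpa using hΨ 0 v v
  intro ℓ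
  constructor
  · intro hℓ v w
    have hle : ∀ p q : V, t p 0 - t q 0 - (4*(s:ℝ)-2)*κ*(G.dist p q : ℝ) ≤
        ⨆ p : V, ⨆ q : V, (t p 0 - t q 0 - (4*(s:ℝ)-2)*κ*(G.dist p q : ℝ)) := by
      intro p q
      refine le_trans ?_ (le_ciSup (f := fun p : V => ⨆ q : V,
        (t p 0 - t q 0 - (4*(s:ℝ)-2)*κ*(G.dist p q : ℝ))) (Set.finite_range _).bddAbove p)
      exact le_ciSup (f := fun q : V => t p 0 - t q 0 - (4*(s:ℝ)-2)*κ*(G.dist p q : ℝ))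
        (Set.finite_range _).bddAbove q
    have hℓκ : (ℓ:ℝ)*κ < Ψ := by rwa [lt_div_iff₀ hκ0] at hℓ
    rcases key ℓ v w ℓ le_rfl with h | ⟨a, p, x, hax, h1, -⟩
    · have := hle v v
      simp only [SimpleGraph.dist_self, Nat.cast_zero, sub_self, mul_zero] at this
      linarith
    · rw [Nat.sub_self] at h1
      have e1 := hξ a p x hax
      have e2 := hle p x
      have e3 : 0 ≤ (ℓ:ℝ)*κ := by positivity
      linarith
  · intro hℓ v w
    have hm : ⌊Ψ/κ⌋₊ ≤ ℓ := by
      have := Nat.floor_le_floor hℓ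
      simpa using this
    have hm1 : (⌊Ψ/κ⌋₊ : ℝ) * κ ≤ Ψ := by
      rw [← le_div_iff₀ hκ0]; exact Nat.floor_le (by positivity)
    have hm2 : Ψ < ((⌊Ψ/κ⌋₊ : ℝ) + 1) * κ := by
      rw [← div_lt_iff₀ hκ0]; exact Nat.lt_floor_add_one _
    rcases key ℓ v w ⌊Ψ/κ⌋₊ hm with h | ⟨a, p, x, hax, h1, -⟩
    · linarith
    · have e1 := hξ a p x hax
      have e2 := hΨ (ℓ - ⌊Ψ/κ⌋₊) p x
      have e3 : 0 ≤ κ * (G.dist p x : ℝ) := by positivity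
      linarith
end

section
/- Under the standing assumptions, if L_0 ≤ 4κ, then L_ℓ ≤ 4κ·(2 + log₂ D) for all ℓ ∈ ℕ (Main Theorem: local skew bound in the absence of faults). -/
section GCS
variable {V : Type*} (G : SimpleGraph V)

lemma gcs_toward (hc : G.Connected) {v q : V} (h : v ≠ q) :
    ∃ x, G.Adj v x ∧ G.dist x q + 1 ≤ G.dist v q := by
  obtain ⟨p, hp⟩ := hc.exists_walk_length_eq_dist v q
  cases p with
  | nil => exact absurd rfl h
  | cons hadj p' =>
    refine ⟨_, hadj, ?_⟩
    rw [← hp, SimpleGraph.Walk.length_cons]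
    have := SimpleGraph.dist_le p'
    omega

lemma gcs_adj_dist (hc : G.Connected) {v x : V} (h : G.Adj v x) (q : V) :
    G.dist x q ≤ G.dist v q + 1 := by
  have h1 := hc.dist_triangle (u := x) (v := v) (w := q)
  have h2 : G.dist x v = 1 := SimpleGraph.dist_eq_one_iff_adj.2 h.symm
  omega

lemma gcs_walk_dist (hc : G.Connected) (p : ℕ → V) (e : ℕ)
    (hp : ∀ i < e, G.Adj (p i) (p (i+1))) (i n : ℕ) (h : i + n ≤ e) :
    G.dist (p i) (p (i+n)) ≤ n := by
  induction n with
  | zero => simp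
  | succ n ih =>
    have h1 := ih (by omega)
    have h2 := hc.dist_triangle (u := p i) (v := p (i+n)) (w := p (i+(n+1)))
    have h3 : G.dist (p (i+n)) (p (i+(n+1))) = 1 :=
      SimpleGraph.dist_eq_one_iff_adj.2 (hp (i+n) (by omega))
    omega

lemma gcs_geodesic (hc : G.Connected) (v w : V) :
    ∃ p : ℕ → V, p 0 = v ∧ p (G.dist v w) = w ∧
      ∀ i < G.dist v w, G.Adj (p i) (p (i+1)) := by
  obtain ⟨p, hp⟩ := hc.exists_walk_length_eq_dist v w
  refine ⟨p.getVert, p.getVert_zero, ?_, ?_⟩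
  · rw [← hp]; exact p.getVert_length
  · intro i hi
    exact p.adj_getVert_succ (by omega)

/-- The correction-free interface: `τ` are drift-normalised pulse times. -/
structure GcsSys (κ : ℝ) (τ : V → ℕ → ℝ) : Prop where
  pos : 0 < κ
  conn : G.Connected
  nbr : ∀ v, ∃ w, G.Adj v w
  fast : ∀ (s : ℕ), 1 ≤ s → ∀ v ℓ,
    (∃ x, G.Adj v x ∧ τ v (ℓ+1) ≤ τ x ℓ - (4*(s:ℝ)-1)*κ) ∨
    (∀ x, G.Adj v x → τ v (ℓ+1) ≤ τ x ℓ + (4*(s:ℝ)-3)*κ) ∨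
    τ v (ℓ+1) ≤ τ v ℓ - κ
  slow : ∀ (s : ℕ) v ℓ,
    (∀ x, G.Adj v x → τ x ℓ ≤ τ v (ℓ+1) + κ/2 + 4*(s:ℝ)*κ) ∨
    (∃ x, G.Adj v x ∧ τ x ℓ ≤ τ v (ℓ+1) + κ/2 - 4*(s:ℝ)*κ) ∨
    τ v ℓ ≤ τ v (ℓ+1) + κ/2
  up : ∀ v ℓ, τ v (ℓ+1) ≤ τ v ℓ ∨ ∀ x, G.Adj v x → τ v (ℓ+1) + κ ≤ τ x ℓ
  dn : ∀ v ℓ, τ v ℓ ≤ τ v (ℓ+1) + 3*κ/2 ∨ ∀ x, G.Adj v x → τ x ℓ + κ/2 ≤ τ v (ℓ+1)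

variable {G} {κ : ℝ} {τ : V → ℕ → ℝ}

/-- First step: the leading node makes progress. -/
lemma GcsSys.first (H : GcsSys G κ τ) (s : ℕ) (hs : 1 ≤ s) (Q : ℝ) (hQ : κ/2 ≤ Q) (ℓ : ℕ)
    (IH : ∀ v w, τ v ℓ - τ w ℓ - 4*(s:ℝ)*κ*(G.dist v w) ≤ Q)
    (v w : V) (hvw : Q < τ v (ℓ+1) - τ w (ℓ+1) - 4*(s:ℝ)*κ*(G.dist v w)) :
    (∃ x, G.Adj v x ∧ τ v (ℓ+1) ≤ τ x ℓ - (4*(s:ℝ)-1)*κ) ∨ τ v (ℓ+1) ≤ τ v ℓ - κ := by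
  have hκ := H.pos
  have hs' : (1:ℝ) ≤ s := by exact_mod_cast hs
  have hsκ : κ ≤ s * κ := by nlinarith
  have hne : v ≠ w := by
    rintro rfl
    simp at hvw
    linarith
  rcases H.fast s hs v ℓ with h | h | h
  · exact Or.inl h
  · exfalso
    obtain ⟨y, hy, hyd⟩ := gcs_toward G H.conn hne
    have hyh := h y hy
    have hyd' : (G.dist y w : ℝ) + 1 ≤ G.dist v w := by exact_mod_cast hyd
    -- the key estimate
    have key : ∀ x : V, ∀ r : ℝ, τ x ℓ ≤ τ w (ℓ+1) + κ/2 - 4*(s:ℝ)*κ*r →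
        (G.dist y x : ℝ) ≤ G.dist y w + r → False := by
      intro x r h1 h2
      have h3 := IH y x
      have h4 : 4*(s:ℝ)*κ*(G.dist y x) ≤ 4*(s:ℝ)*κ*(G.dist v w - 1 + r) :=
        mul_le_mul_of_nonneg_left (by linarith) (by positivity)
      linarith
    rcases H.slow s w ℓ with g | ⟨x, hx, g⟩ | g
    · by_cases hyw : y = w
      · subst hyw
        have h1 : τ v ℓ ≤ τ y (ℓ+1) + κ/2 + 4*(s:ℝ)*κ := g v hy.symm
        have hd : G.dist v y = 1 := SimpleGraph.dist_eq_one_iff_adj.2 hy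
        have hd' : G.dist y v = 1 := SimpleGraph.dist_eq_one_iff_adj.2 hy.symm
        rw [hd] at hvw
        push_cast at hvw
        rcases H.up v ℓ with u | u
        · linarith
        · have u1 := u y hy
          rcases H.dn y ℓ with d | d
          · linarith
          · have d1 := d v hy.symm
            have := IH y v
            rw [hd'] at this
            push_cast at this
            linarith
      · obtain ⟨x, hx, hxd⟩ := gcs_toward G H.conn (Ne.symm hyw)
        have hxd' : (G.dist x y : ℝ) + 1 ≤ G.dist w y := by exact_mod_cast hxd
        rw [G.dist_comm (u := w), G.dist_comm (u := x)] at hxd'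
        refine key x (-1) ?_ (by linarith)
        have := g x hx
        linarith
    · refine key x 1 (by linarith) ?_
      have := gcs_adj_dist G H.conn hx y
      rw [G.dist_comm (u := w), G.dist_comm (u := x)] at this
      exact_mod_cast this
    · exact key w 0 (by linarith) (by linarith)
  · exact Or.inr h

/-- The state of the backward trace, `j` layers below the top. -/
def GcsState (G : SimpleGraph V) (κ : ℝ) (τ : V → ℕ → ℝ) (s : ℕ) (S ψ : ℝ) (v₁ : V)
    (ℓ j : ℕ) : Prop :=
  ∃ (p : ℕ → V) (e : ℕ), p 0 = v₁ ∧ (∀ i < e, G.Adj (p i) (p (i+1))) ∧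
    (1 ≤ j → ∀ i ≤ e, ∃ x, S - (4*(s:ℝ)-2)*κ*i + κ*j ≤ τ x ℓ - (4*(s:ℝ)-2)*κ*(G.dist x (p i))) ∧
    ((τ (p e) ℓ + 4*(s:ℝ)*κ*e ≤ S - ψ + κ/2*j ∧ ∃ T ≤ e, S ≤ τ (p T) ℓ) ∨
     (∃ b : ℕ, b ≤ 1 ∧ 1 ≤ e + b ∧ τ (p e) ℓ + 4*(s:ℝ)*κ*(e+b) ≤ S - ψ + κ/2*j ∧
        ∀ y, G.Adj (p e) y → S ≤ τ y ℓ))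

/-- Bound on the `j`-part in one backward step. -/
lemma GcsSys.stepJ (H : GcsSys G κ τ) (s : ℕ) (hs : 1 ≤ s) (S : ℝ) (q : V) (ℓ : ℕ) (r g : ℝ)
    (hx : ∃ x, S - r + g ≤ τ x (ℓ+1) - (4*(s:ℝ)-2)*κ*(G.dist x q))
    (hq : τ q (ℓ+1) < S - r + g) :
    ∃ x, S - r + (g + κ) ≤ τ x ℓ - (4*(s:ℝ)-2)*κ*(G.dist x q) := by
  have hκ := H.pos
  have hs' : (1:ℝ) ≤ s := by exact_mod_cast hs
  have hc : 0 ≤ (4*(s:ℝ)-2)*κ := mul_nonneg (by linarith) hκ.le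
  obtain ⟨x, hx⟩ := hx
  rcases H.fast s hs x ℓ with ⟨y, hy, h⟩ | h | h
  · refine ⟨y, ?_⟩
    have hd : (G.dist y q : ℝ) ≤ G.dist x q + 1 := by exact_mod_cast gcs_adj_dist G H.conn hy q
    have := mul_le_mul_of_nonneg_left hd hc
    linarith
  · have hne : x ≠ q := by
      rintro rfl
      simp at hx
      linarith
    obtain ⟨y, hy, hyd⟩ := gcs_toward G H.conn hne
    refine ⟨y, ?_⟩
    have hd : (G.dist y q : ℝ) + 1 ≤ G.dist x q := by exact_mod_cast hyd
    have := mul_le_mul_of_nonneg_left hd hc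
    have := h y hy
    linarith
  · exact ⟨x, by linarith⟩


lemma GcsSys.push (H : GcsSys G κ τ) (s : ℕ) (hs : 1 ≤ s) (S g : ℝ) (ℓ : ℕ) (p : ℕ → V) (e : ℕ)
    (hp : ∀ i < e, G.Adj (p i) (p (i+1)))
    (hJ : ∀ i ≤ e, ∃ x, S - (4*(s:ℝ)-2)*κ*i + g ≤ τ x ℓ - (4*(s:ℝ)-2)*κ*(G.dist x (p i)))
    (y : V) (hy : G.Adj (p e) y) :
    ∃ p' : ℕ → V, (∀ i ≤ e, p' i = p i) ∧ p' (e+1) = y ∧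
      (∀ i < e+1, G.Adj (p' i) (p' (i+1))) ∧
      (∀ i ≤ e+1, ∃ x, S - (4*(s:ℝ)-2)*κ*i + g ≤ τ x ℓ - (4*(s:ℝ)-2)*κ*(G.dist x (p' i))) := by
  have hκ := H.pos
  have hs' : (1:ℝ) ≤ s := by exact_mod_cast hs
  have hc : 0 ≤ (4*(s:ℝ)-2)*κ := mul_nonneg (by linarith) hκ.le
  have h1 : ∀ i ≤ e, (fun i => if i ≤ e then p i else y) i = p i := by
    intro i hi; simp [hi]
  have h2 : (fun i => if i ≤ e then p i else y) (e+1) = y := by simp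
  refine ⟨fun i => if i ≤ e then p i else y, h1, h2, ?_, ?_⟩
  · intro i hi
    rcases Nat.lt_or_ge i e with h | h
    · rw [h1 i h.le, h1 (i+1) h]; exact hp i h
    · have : i = e := by omega
      subst this
      rw [h1 i le_rfl, h2]; exact hy
  · intro i hi
    rcases Nat.lt_or_ge e i with h | h
    · have : i = e+1 := by omega
      subst this
      rw [h2]
      obtain ⟨x, hx⟩ := hJ e le_rfl
      refine ⟨x, ?_⟩
      have hd := gcs_adj_dist G H.conn hy x
      rw [G.dist_comm (u := y), G.dist_comm (u := p e)] at hd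
      have hd' : (G.dist x y : ℝ) ≤ G.dist x (p e) + 1 := by exact_mod_cast hd
      have := mul_le_mul_of_nonneg_left hd' hc
      push_cast
      linarith
    · rw [h1 i h]; exact hJ i h

lemma GcsSys.step (H : GcsSys G κ τ) (s : ℕ) (hs : 1 ≤ s) (Q S ψ : ℝ) (v₁ : V) (ℓ j : ℕ)
    (hQ : Q < ψ) (hψ : κ/2*((j:ℝ)+1) < ψ)
    (hfirst : j = 0 → (∃ x, G.Adj v₁ x ∧ S ≤ τ x ℓ - (4*(s:ℝ)-1)*κ) ∨ S ≤ τ v₁ ℓ - κ)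
    (IH : 1 ≤ j → ∀ v w, τ v (ℓ+1) - τ w (ℓ+1) - 4*(s:ℝ)*κ*(G.dist v w) ≤ Q)
    (hst : GcsState G κ τ s S ψ v₁ (ℓ+1) j) : GcsState G κ τ s S ψ v₁ ℓ (j+1) := by
  have hκ := H.pos
  have hs' : (1:ℝ) ≤ s := by exact_mod_cast hs
  have hsκ : κ ≤ s * κ := by nlinarith
  have hc : 0 ≤ (4*(s:ℝ)-2)*κ := mul_nonneg (by linarith) hκ.le
  have hc4 : 0 ≤ 4*(s:ℝ)*κ := by positivity
  obtain ⟨p, e, hp0, hp, hJ, hK⟩ := hst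
  have hI : τ (p e) (ℓ+1) + 4*(s:ℝ)*κ*e ≤ S - ψ + κ/2*j := by
    rcases hK with ⟨h, -⟩ | ⟨b, -, -, h, -⟩
    · exact h
    · have : 0 ≤ 4*(s:ℝ)*κ*b := by positivity
      linarith
  -- progress of the leading side
  have hJ' : ∀ i ≤ e, ∃ x, S - (4*(s:ℝ)-2)*κ*i + (κ*j + κ) ≤
      τ x ℓ - (4*(s:ℝ)-2)*κ*(G.dist x (p i)) := by
    intro i hi
    rcases Nat.eq_zero_or_pos j with h0 | hj
    · have hd : (G.dist v₁ (p i) : ℝ) ≤ i := by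
        have := gcs_walk_dist G H.conn p e hp 0 i (by omega)
        rw [hp0, zero_add] at this
        exact_mod_cast this
      subst h0
      rcases hfirst rfl with ⟨x, hx, h⟩ | h
      · refine ⟨x, ?_⟩
        have hd2 : (G.dist x (p i) : ℝ) ≤ G.dist v₁ (p i) + 1 := by
          exact_mod_cast gcs_adj_dist G H.conn hx (p i)
        have := mul_le_mul_of_nonneg_left (hd2.trans (by linarith : _ ≤ (i:ℝ) + 1)) hc
        push_cast
        linarith
      · refine ⟨v₁, ?_⟩
        have := mul_le_mul_of_nonneg_left hd hc
        push_cast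
        linarith
    · refine H.stepJ s hs S (p i) ℓ _ _ (hJ hj i hi) ?_
      by_contra hcon
      push Not at hcon
      have h1 := IH hj (p i) (p e)
      obtain ⟨n, rfl⟩ := Nat.exists_eq_add_of_le hi
      have hd : (G.dist (p i) (p (i+n)) : ℝ) ≤ n := by
        exact_mod_cast gcs_walk_dist G H.conn p _ hp i n le_rfl
      have h2 := mul_le_mul_of_nonneg_left hd hc4
      push_cast at hI
      have h3 : 0 ≤ κ * i := by positivity
      have h4 : 0 ≤ κ * j := by positivity
      linarith
  have hg : κ*((j+1:ℕ):ℝ) = κ*j + κ := by push_cast; ring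
  have hg2 : κ/2*((j+1:ℕ):ℝ) = κ/2*j + κ/2 := by push_cast; ring
  have hes : 0 ≤ 4*(s:ℝ)*κ*e := by positivity
  unfold GcsState
  rw [hg, hg2]
  rcases hK with ⟨-, T, hTe, hT⟩ | ⟨b, hb, heb, hIb, hn⟩
  · have hTlt : T < e := by
      rcases Nat.lt_or_ge T e with h | h
      · exact h
      · have : T = e := by omega
        subst this
        linarith
    -- normal backward step for the trailing side
    have normal : ∀ T' < e, S ≤ τ (p T') ℓ → ∃ (p : ℕ → V) (e : ℕ), p 0 = v₁ ∧
        (∀ i < e, G.Adj (p i) (p (i+1))) ∧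
        (1 ≤ j+1 → ∀ i ≤ e, ∃ x, S - (4*(s:ℝ)-2)*κ*i + (κ*j+κ) ≤
          τ x ℓ - (4*(s:ℝ)-2)*κ*(G.dist x (p i))) ∧
        (τ (p e) ℓ + 4*(s:ℝ)*κ*e ≤ S - ψ + (κ/2*j + κ/2) ∧ ∃ T ≤ e, S ≤ τ (p T) ℓ) := by
      intro T' hT' hS
      rcases H.slow s (p e) ℓ with g | ⟨x, hx, g⟩ | g
      · obtain ⟨f, rfl⟩ : ∃ f, e = f + 1 := ⟨e-1, by omega⟩
        refine ⟨p, f, hp0, fun i hi => hp i (by omega), fun _ i hi => hJ' i (by omega), ?_,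
          T', by omega, hS⟩
        have := g (p f) (hp f (by omega)).symm
        push_cast at hI
        linarith
      · obtain ⟨p', h1, h2, h3, h4⟩ := H.push s hs S _ ℓ p e hp hJ' x hx
        refine ⟨p', e+1, ?_, h3, fun _ => h4, ?_, T', by omega, ?_⟩
        · rw [h1 0 (by omega), hp0]
        · rw [h2]; push_cast; linarith
        · rw [h1 T' hT'.le]; exact hS
      · exact ⟨p, e, hp0, hp, fun _ => hJ', by linarith, T', hT'.le, hS⟩
    have fin : ∀ T' < e, S ≤ τ (p T') ℓ → _ := fun T' h1 h2 =>
      let ⟨a, b, c1, c2, c3, c4⟩ := normal T' h1 h2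
      (⟨a, b, c1, c2, c3, Or.inl c4⟩ : ∃ (p : ℕ → V) (e : ℕ), p 0 = v₁ ∧
        (∀ i < e, G.Adj (p i) (p (i+1))) ∧
        (1 ≤ j+1 → ∀ i ≤ e, ∃ x, S - (4*(s:ℝ)-2)*κ*i + (κ*j+κ) ≤
          τ x ℓ - (4*(s:ℝ)-2)*κ*(G.dist x (p i))) ∧
        ((τ (p e) ℓ + 4*(s:ℝ)*κ*e ≤ S - ψ + (κ/2*j + κ/2) ∧ ∃ T ≤ e, S ≤ τ (p T) ℓ) ∨
        (∃ b : ℕ, b ≤ 1 ∧ 1 ≤ e + b ∧ τ (p e) ℓ + 4*(s:ℝ)*κ*(e+b) ≤ S - ψ + (κ/2*j + κ/2) ∧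
        ∀ y, G.Adj (p e) y → S ≤ τ y ℓ)))
    rcases H.up (p T) ℓ with u | u
    · exact fin T hTlt (by linarith)
    · have u1 := u (p (T+1)) (hp T hTlt)
      rcases Nat.lt_or_ge (T+1) e with h | h
      · exact fin (T+1) h (by linarith)
      · have : e = T+1 := by omega
        subst this
        rcases H.dn (p (T+1)) ℓ with d | d
        · linarith
        · have d1 := d (p T) (hp T hTlt).symm
          refine ⟨p, T, hp0, fun i hi => hp i (by omega), fun _ i hi => hJ' i (by omega),
            Or.inr ⟨1, le_rfl, by omega, ?_, ?_⟩⟩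
          · push_cast at hI ⊢
            linarith
          · intro y hy
            have := u y hy
            linarith
  · have hbs : 0 ≤ 4*(s:ℝ)*κ*b := by positivity
    have hlow : τ (p e) (ℓ+1) < S - κ/2 := by linarith
    rcases H.dn (p e) ℓ with d | d
    · -- stay
      have hn' : ∀ y, G.Adj (p e) y → S ≤ τ y ℓ := by
        intro y hy
        have h1 := hn y hy
        rcases H.up y ℓ with u | u
        · linarith
        · have := u (p e) hy.symm
          linarith
      refine ⟨p, e, hp0, hp, fun _ => hJ', Or.inr ⟨b, hb, heb, ?_, hn'⟩⟩
      rcases H.slow 0 (p e) ℓ with g | ⟨x, hx, g⟩ | g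
      · obtain ⟨x, hx⟩ := H.nbr (p e)
        have h1 := g x hx
        have h2 := hn' x hx
        push_cast at h1
        linarith
      · have h2 := hn' x hx
        push_cast at g
        linarith
      · linarith
    · have hup : ∀ y, G.Adj (p e) y → ∀ z, G.Adj y z → S ≤ τ z ℓ := by
        intro y hy z hz
        have h1 := hn y hy
        have h2 := d y hy
        rcases H.up y ℓ with u | u
        · linarith
        · have := u z hz
          linarith
      rcases Nat.eq_zero_or_pos b with h0 | h0
      · subst h0
        obtain ⟨f, rfl⟩ : ∃ f, e = f + 1 := ⟨e-1, by omega⟩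
        have ha := (hp f (by omega)).symm
        refine ⟨p, f, hp0, fun i hi => hp i (by omega), fun _ i hi => hJ' i (by omega),
            Or.inr ⟨1, le_rfl, by omega, ?_, hup _ ha⟩⟩
        have := d _ ha
        push_cast at hI ⊢
        linarith
      · have : b = 1 := by omega
        subst this
        obtain ⟨x, hx⟩ := H.nbr (p e)
        obtain ⟨p', h1, h2, h3, h4⟩ := H.push s hs S _ ℓ p e hp hJ' x hx
        refine ⟨p', e+1, ?_, h3, fun _ => h4, Or.inr ⟨0, by omega, by omega, ?_, ?_⟩⟩
        · rw [h1 0 (by omega), hp0]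
        · rw [h2]
          have := d x hx
          push_cast at hIb ⊢
          linarith
        · rw [h2]; exact hup x hx

/-- The main amortised lemma. -/
lemma GcsSys.main (H : GcsSys G κ τ) (s : ℕ) (hs : 1 ≤ s) (Q : ℝ) (k : ℕ) (hk : 1 ≤ k)
    (hkQ : κ/2*k ≤ Q)
    (h0 : ∀ v w, τ v 0 - τ w 0 ≤ 4*κ*(G.dist v w))
    (hΞ : ∀ ℓ, (∀ v w, τ v ℓ - τ w ℓ - 4*(s:ℝ)*κ*(G.dist v w) ≤ Q) →
      ∀ v w, τ v ℓ - τ w ℓ - (4*(s:ℝ)-2)*κ*(G.dist v w) ≤ Q + κ/2*k) :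
    ∀ ℓ v w, τ v ℓ - τ w ℓ - 4*(s:ℝ)*κ*(G.dist v w) ≤ Q := by
  have hκ := H.pos
  have hs' : (1:ℝ) ≤ s := by exact_mod_cast hs
  have hsκ : κ ≤ s * κ := by nlinarith
  have hk' : (1:ℝ) ≤ k := by exact_mod_cast hk
  have hQκ : κ/2 ≤ Q := by nlinarith
  intro L
  induction L using Nat.strong_induction_on with
  | _ L IH =>
  intro v w
  by_contra hcon
  push Not at hcon
  set S := τ v L with hS
  set ψ := S - τ w L - 4*(s:ℝ)*κ*(G.dist v w) with hψ
  have trace : ∀ j ≤ k, ∀ ℓ, ℓ + j = L → GcsState G κ τ s S ψ v ℓ j := by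
    intro j
    induction j with
    | zero =>
      intro _ ℓ hℓ
      have : ℓ = L := by omega
      subst this
      obtain ⟨p, hp0, hpe, hp⟩ := gcs_geodesic G H.conn v w
      refine ⟨p, G.dist v w, hp0, hp, fun h => by omega, Or.inl ⟨?_, 0, by omega, ?_⟩⟩
      · rw [hpe, hψ]; push_cast; linarith
      · rw [hp0]
    | succ j ihj =>
      intro hj ℓ hℓ
      have hst := ihj (by omega) (ℓ+1) (by omega)
      refine H.step s hs Q S ψ v ℓ j hcon ?_ ?_ ?_ hst
      · have : ((j+1:ℕ):ℝ) ≤ k := by exact_mod_cast hj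
        push_cast at this
        nlinarith
      · intro hj0
        have hL : L = ℓ+1 := by omega
        subst hL
        exact H.first s hs Q hQκ ℓ (IH ℓ (by omega)) v w hcon
      · intro hj1
        exact IH (ℓ+1) (by omega)
  rcases Nat.lt_or_ge L k with hLk | hLk
  · obtain ⟨p, e, hp0, hp, -, hK⟩ := trace L hLk.le 0 (by omega)
    have hL' : (L:ℝ) ≤ k := by exact_mod_cast hLk.le
    have hlt : κ/2*L < ψ := by nlinarith
    rcases hK with ⟨h, T, hTe, hT⟩ | ⟨b, hb, heb, h, hn⟩
    · obtain ⟨n, rfl⟩ := Nat.exists_eq_add_of_le hTe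
      have hd : (G.dist (p T) (p (T+n)) : ℝ) ≤ n := by
        exact_mod_cast gcs_walk_dist G H.conn p _ hp T n le_rfl
      have h1 := h0 (p T) (p (T+n))
      have h2 := mul_le_mul_of_nonneg_left hd (by positivity : 0 ≤ 4*κ)
      have h3 : κ * n ≤ s * κ * n := mul_le_mul_of_nonneg_right hsκ (by positivity)
      have h4 : 0 ≤ s * κ * T := by positivity
      push_cast at h
      linarith
    · obtain ⟨y, hy⟩ := H.nbr (p e)
      have h1 := hn y hy
      have h2 := h0 y (p e)
      have hd : G.dist y (p e) = 1 := SimpleGraph.dist_eq_one_iff_adj.2 hy.symm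
      rw [hd] at h2
      have h3 : (1:ℝ) ≤ (e:ℝ) + b := by exact_mod_cast heb
      have h4 := mul_le_mul_of_nonneg_left h3 (by positivity : 0 ≤ 4*(s:ℝ)*κ)
      push_cast at h2
      linarith
  · obtain ⟨p, e, hp0, hp, hJ, hK⟩ := trace k le_rfl (L-k) (by omega)
    have hI : τ (p e) (L-k) + 4*(s:ℝ)*κ*e ≤ S - ψ + κ/2*k := by
      rcases hK with ⟨h, -⟩ | ⟨b, -, -, h, -⟩
      · exact h
      · have : 0 ≤ 4*(s:ℝ)*κ*b := by positivity
        linarith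
    obtain ⟨x, hx⟩ := hJ hk e le_rfl
    have h1 := hΞ (L-k) (IH (L-k) (by omega)) x (p e)
    have h2 : 0 ≤ κ * e := by positivity
    linarith

lemma GcsSys.levels (H : GcsSys G κ τ) (D : ℕ) (hD : 1 ≤ D) (hdiam : ∀ v w, G.dist v w ≤ D)
    (h0 : ∀ v w, τ v 0 - τ w 0 ≤ 4*κ*(G.dist v w)) (n : ℕ) :
    ∀ ℓ v w, τ v ℓ - τ w ℓ - 4*((n+1:ℕ):ℝ)*κ*(G.dist v w) ≤ κ*(2*D/2^n+1) := by
  have hκ := H.pos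
  induction n with
  | zero =>
    intro ℓ v w
    have := H.main 1 le_rfl (2*κ*D) (4*D) (by omega) (by push_cast; linarith) h0 ?_ ℓ v w
    · push_cast at this ⊢
      linarith
    · intro ℓ hℓ v w
      have h1 := hℓ v w
      have hd : (G.dist v w : ℝ) ≤ D := by exact_mod_cast hdiam v w
      have := mul_le_mul_of_nonneg_left hd hκ.le
      push_cast at h1 ⊢
      linarith
  | succ n ih =>
    set P : ℝ := 2*D/2^n+1 with hP
    have hP1 : 0 < P := by positivity
    have hc1 := Nat.le_ceil P
    have hc2 := Nat.ceil_lt_add_one hP1.le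
    have hk : 1 ≤ ⌈P⌉₊ := Nat.one_le_iff_ne_zero.2 (Nat.ceil_pos.2 hP1).ne'
    have e1 : κ*(2*D/2^(n+1)+1) = κ*P/2 + κ/2 := by
      rw [hP, pow_succ]; field_simp; ring
    rw [e1]
    have hc1' := mul_le_mul_of_nonneg_left hc1 hκ.le
    have hc2' := mul_le_mul_of_nonneg_left hc2.le hκ.le
    refine H.main (n+1+1) (by omega) _ ⌈P⌉₊ hk (by linarith) h0 ?_
    intro ℓ _ v w
    have h1 := ih ℓ v w
    have h2 : 0 ≤ κ * (G.dist v w : ℝ) := by positivity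
    push_cast at h1 ⊢
    linarith

end GCS

/-- The `tmax`/`tmin` over neighbours in the SC/FC/JC conditions are expressed
pointwise over the (nonempty) neighbourhood, which is equivalent. -/
theorem stmt12
    (ϑ u d Λ κ : ℝ)
    (hϑ : 1 < ϑ) (hu : 0 ≤ u) (hd : u ≤ d) (hΛ : d < Λ)
    (hκ : κ = 2 * (u + (1 - 1/ϑ) * (Λ - d)))
    {V : Type*} [Fintype V] [Nonempty V]
    (G : SimpleGraph V) [DecidableRel G.Adj]
    (hconn : G.Connected) (hdeg : ∀ v : V, 2 ≤ G.degree v)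
    (D : ℕ) (hD : 1 ≤ D) (hdiam : ∀ v w : V, G.dist v w ≤ D)
    (t : V → ℕ → ℝ) (C : V → ℕ → ℝ)
    (hDRIFT : ∀ (v : V) (ℓ : ℕ),
      d - u + (Λ - d - C v (ℓ+1)) / ϑ ≤ t v (ℓ+1) - t v ℓ ∧
      t v (ℓ+1) - t v ℓ ≤ Λ - C v (ℓ+1))
    (hSC : ∀ (s : ℕ) (v : V) (ℓ : ℕ),
      (∀ w : V, G.Adj v w → C v (ℓ+1) / ϑ ≤ t v ℓ - t w ℓ + 4*(s:ℝ)*κ) ∨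
      (∃ w : V, G.Adj v w ∧ C v (ℓ+1) / ϑ ≤ t v ℓ - t w ℓ - 4*(s:ℝ)*κ) ∨
      C v (ℓ+1) ≤ 0)
    (hFC : ∀ (s : ℕ), 1 ≤ s → ∀ (v : V) (ℓ : ℕ),
      (∃ w : V, G.Adj v w ∧ t v ℓ - t w ℓ + (4*(s:ℝ)-2)*κ + κ ≤ C v (ℓ+1)) ∨
      (∀ w : V, G.Adj v w → t v ℓ - t w ℓ - (4*(s:ℝ)-2)*κ + κ ≤ C v (ℓ+1)) ∨
      κ ≤ C v (ℓ+1))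
    (hJC : ∀ (v : V) (ℓ : ℕ),
      (κ < C v (ℓ+1)/ϑ ∧ ∀ w : V, G.Adj v w → C v (ℓ+1)/ϑ ≤ t v ℓ - t w ℓ - κ) ∨
      (C v (ℓ+1) < 0 ∧ ∀ w : V, G.Adj v w → t v ℓ - t w ℓ + κ ≤ C v (ℓ+1)) ∨
      (0 ≤ C v (ℓ+1)/ϑ ∧ C v (ℓ+1)/ϑ ≤ κ))
    (hL0 : ∀ v w : V, G.Adj v w → |t v 0 - t w 0| ≤ 4*κ) :
    ∀ (ℓ : ℕ) (v w : V), G.Adj v w →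
      |t v ℓ - t w ℓ| ≤ 4*κ*(2 + Real.logb 2 (D:ℝ)) := by
  have hϑ0 : 0 < ϑ := by linarith
  have hinv : 1/ϑ < 1 := by rw [div_lt_one hϑ0]; exact hϑ
  have hκ0 : 0 < κ := by
    have : 0 < (1 - 1/ϑ) * (Λ - d) := mul_pos (by linarith) (by linarith)
    linarith
  have hU : ∀ v ℓ, t v (ℓ+1) - Λ ≤ t v ℓ - C v (ℓ+1) := fun v ℓ => by
    linarith [(hDRIFT v ℓ).2]
  have hLo : ∀ v ℓ, t v ℓ - κ/2 - C v (ℓ+1)/ϑ ≤ t v (ℓ+1) - Λ := fun v ℓ => by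
    have h1 := (hDRIFT v ℓ).1
    have h2 : (Λ - d - C v (ℓ+1)) / ϑ = (1/ϑ) * (Λ - d) - C v (ℓ+1)/ϑ := by ring
    rw [h2] at h1
    rw [hκ]
    linarith
  have H : GcsSys G κ (fun v ℓ => t v ℓ - Λ * ℓ) := by
    refine ⟨hκ0, hconn, ?_, ?_, ?_, ?_, ?_⟩
    · intro v
      have h := hdeg v
      have : 0 < G.degree v := by omega
      exact (G.degree_pos_iff_exists_adj v).1 this
    · intro s hs v ℓ
      have hu := hU v ℓ
      rcases hFC s hs v ℓ with ⟨x, hx, h⟩ | h | h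
      · left; refine ⟨x, hx, ?_⟩; push_cast; linarith
      · right; left; intro x hx; have := h x hx; push_cast; linarith
      · right; right; push_cast; linarith
    · intro s v ℓ
      have hl := hLo v ℓ
      rcases hSC s v ℓ with h | ⟨x, hx, h⟩ | h
      · left; intro x hx; have := h x hx; push_cast; linarith
      · right; left; refine ⟨x, hx, ?_⟩; push_cast; linarith
      · right; right
        have : C v (ℓ+1)/ϑ ≤ 0 := div_nonpos_of_nonpos_of_nonneg h hϑ0.le
        push_cast; linarith
    · intro v ℓ
      have hu := hU v ℓ
      have key : 0 ≤ C v (ℓ+1)/ϑ → 0 ≤ C v (ℓ+1) := fun h => by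
        have := mul_nonneg h hϑ0.le
        rwa [div_mul_cancel₀ _ hϑ0.ne'] at this
      rcases hJC v ℓ with ⟨h, -⟩ | ⟨-, h⟩ | ⟨h, -⟩
      · left; have := key (by linarith); push_cast; linarith
      · right; intro x hx; have := h x hx; push_cast; linarith
      · left; have := key h; push_cast; linarith
    · intro v ℓ
      have hl := hLo v ℓ
      rcases hJC v ℓ with ⟨-, h⟩ | ⟨h, -⟩ | ⟨-, h⟩
      · right; intro x hx; have := h x hx; push_cast; linarith
      · left
        have : C v (ℓ+1)/ϑ ≤ 0 := div_nonpos_of_nonpos_of_nonneg h.le hϑ0.le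
        push_cast; linarith
      · left; push_cast; linarith
  have h0 : ∀ v w, (fun v ℓ => t v ℓ - Λ * (ℓ:ℕ)) v 0 - (fun v ℓ => t v ℓ - Λ * (ℓ:ℕ)) w 0
      ≤ 4*κ*(G.dist v w) := by
    intro v w
    obtain ⟨p, hp0, hpe, hp⟩ := gcs_geodesic G hconn v w
    have : ∀ n ≤ G.dist v w, t v 0 - t (p n) 0 ≤ 4*κ*n := by
      intro n
      induction n with
      | zero => intro _; rw [hp0]; simp
      | succ n ih =>
        intro hn
        have h1 := ih (by omega)
        have h2 := (abs_le.1 (hL0 _ _ (hp n (by omega)))).2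
        push_cast
        linarith
    have := this _ le_rfl
    rw [hpe] at this
    simpa using this
  set n := Nat.log 2 D with hn
  have hlev := H.levels D hD hdiam h0 n
  have hDpos : (0:ℝ) < D := by exact_mod_cast hD
  have hpow : (0:ℝ) < 2^n := by positivity
  have hx1 : (1:ℝ) ≤ D/2^n := by
    rw [le_div_iff₀ hpow, one_mul]
    exact_mod_cast Nat.pow_log_le_self 2 (by omega)
  have hx2 : (D:ℝ)/2^n ≤ 2 := by
    rw [div_le_iff₀ hpow]
    have := (Nat.lt_pow_succ_log_self (b := 2) (by norm_num) D).le
    rw [pow_succ, mul_comm] at this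
    exact_mod_cast this
  have hlog : Real.logb 2 (D:ℝ) = n + Real.logb 2 ((D:ℝ)/2^n) := by
    rw [Real.logb_div hDpos.ne' hpow.ne', Real.logb_pow, Real.logb_self_eq_one (by norm_num)]
    ring
  set x : ℝ := (D:ℝ)/2^n with hx
  set f := Real.logb 2 x with hf
  have hf0 : 0 ≤ f := Real.logb_nonneg (by norm_num) hx1
  have hf1 : f ≤ 1 := by
    rw [hf, Real.logb_le_iff_le_rpow (by norm_num) (by linarith)]
    simpa using hx2
  have hxf : x ≤ 1 + f := by
    have h1 : (2:ℝ)^f = x := Real.rpow_logb (by norm_num) (by norm_num) (by linarith)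
    have h2 := rpow_one_add_le_one_add_mul_self (s := 1) (by norm_num) hf0 hf1
    norm_num at h2
    rw [h1] at h2
    exact h2
  have one : ∀ ℓ v w, G.Adj v w → t v ℓ - t w ℓ ≤ 4*κ*(2 + Real.logb 2 (D:ℝ)) := by
    intro ℓ v w hvw
    have h1 := hlev ℓ v w
    rw [SimpleGraph.dist_eq_one_iff_adj.2 hvw, mul_div_assoc, ← hx] at h1
    push_cast at h1
    rw [hlog]
    have h2 := mul_le_mul_of_nonneg_left hxf hκ0.le
    have h3 := mul_nonneg hκ0.le hf0
    linarith
  intro ℓ v w hvw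
  rw [abs_le]
  exact ⟨by linarith [one ℓ w v hvw.symm], one ℓ v w hvw⟩
end

section
/- Under the standing assumptions, let s ≤ s′ be natural numbers, ℓ̲ ∈ ℕ, and Ψs a real with Ψ^s(ℓ) ≤ Ψs for all ℓ ≥ ℓ̲. Then: (i) L_ℓ ≤ 4sκ + Ψs for all ℓ with ℓ̲ ≤ ℓ < ℓ̲ + 2Ψs/κ; and (ii) L_ℓ ≤ 4s′κ + Ψs/2^{s′−s} for all ℓ ≥ ℓ̲ + 2Ψs/κ (self-stabilization of the local skew). -/
/-- Backward invariant on one layer. -/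
def SkInv {V : Type*} (G : SimpleGraph V) (A κ : ℝ) (T : V → ℝ) (tv tw : ℝ) (k n : ℕ) : Prop :=
  ∃ (p z y : V) (g j Y : ℕ),
    T z ≤ tw + (A + 2*κ) * ((k:ℝ) - Y) + κ * n / 2 ∧
    tv ≤ T y + A * ((g:ℝ) - j) - κ * n ∧
    G.dist y p ≤ j ∧
    ((tv ≤ T p + A * g ∧ g + G.dist z p ≤ Y) ∨
      ∃ q, G.Adj p q ∧ tv ≤ T q + A * g ∧ g + 1 + G.dist z p ≤ Y)

theorem sk_closer {V : Type*} (G : SimpleGraph V) (hconn : G.Connected) (y p : V) (h : y ≠ p) :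
    ∃ x, G.Adj y x ∧ G.dist x p + 1 = G.dist y p := by
  obtain ⟨w, hw⟩ := hconn.exists_walk_length_eq_dist y p
  cases w with
  | nil => exact absurd rfl h
  | @cons _ x _ hadj w' =>
    refine ⟨x, hadj, ?_⟩
    have h1 : G.dist x p ≤ w'.length := G.dist_le w'
    have h2 : G.dist y p ≤ G.dist y x + G.dist x p := hconn.dist_triangle
    have h3 : G.dist y x = 1 := SimpleGraph.dist_eq_one_iff_adj.mpr hadj
    simp at hw
    omega

theorem sk_adj {V : Type*} (G : SimpleGraph V) (hconn : G.Connected) {x y : V} (p : V)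
    (h : G.Adj x y) : G.dist y p ≤ G.dist x p + 1 := by
  have h2 : G.dist y p ≤ G.dist y x + G.dist x p := hconn.dist_triangle
  have h3 : G.dist y x = 1 := SimpleGraph.dist_eq_one_iff_adj.mpr h.symm
  omega

theorem sk_adj' {V : Type*} (G : SimpleGraph V) (hconn : G.Connected) {x y : V} (p : V)
    (h : G.Adj x y) : G.dist p y ≤ G.dist p x + 1 := by
  have h2 : G.dist p y ≤ G.dist p x + G.dist x y := hconn.dist_triangle
  have h3 : G.dist x y = 1 := SimpleGraph.dist_eq_one_iff_adj.mpr h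
  omega

theorem sk_ystep {V : Type*} (G : SimpleGraph V) (hconn : G.Connected) (A κ : ℝ) (T T' : V → ℝ)
    (hF : ∀ v, (∃ x, G.Adj v x ∧ T' v ≤ T x - A - κ) ∨ (∀ x, G.Adj v x → T' v ≤ T x + A - κ) ∨
      T' v ≤ T v - κ) (y p : V) (hyp : y ≠ p) (j : ℕ) (hj : G.dist y p ≤ j) :
    ∃ (y' : V) (j' : ℕ), G.dist y' p ≤ j' ∧ T' y - A * j ≤ T y' - A * j' - κ := by
  rcases hF y with ⟨x, hx, h⟩ | h | h
  · refine ⟨x, j + 1, ?_, ?_⟩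
    · have := sk_adj G hconn p hx
      omega
    · push_cast
      linarith
  · obtain ⟨x, hx, hd⟩ := sk_closer G hconn y p hyp
    obtain ⟨i, rfl⟩ : ∃ i, j = i + 1 := ⟨j - 1, by omega⟩
    refine ⟨x, i, by omega, ?_⟩
    have := h x hx
    push_cast
    linarith
  · exact ⟨y, j, hj, by linarith⟩

theorem sk_zstep {V : Type*} (G : SimpleGraph V) (hconn : G.Connected) (A κ : ℝ) (T T' : V → ℝ)
    (hS : ∀ v, (∀ x, G.Adj v x → T x - (A + 2*κ) - κ/2 ≤ T' v) ∨
      (∃ x, G.Adj v x ∧ T x + (A + 2*κ) - κ/2 ≤ T' v) ∨ T v - κ/2 ≤ T' v)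
    (z p : V) (hzp : z ≠ p) (Y g : ℕ) (hg : g + G.dist z p ≤ Y) :
    ∃ (z' : V) (Y' : ℕ), g + G.dist z' p ≤ Y' ∧
      T z' + (A + 2*κ) * Y' ≤ T' z + (A + 2*κ) * Y + κ/2 := by
  rcases hS z with h | ⟨x, hx, h⟩ | h
  · obtain ⟨x, hx, hd⟩ := sk_closer G hconn z p hzp
    obtain ⟨i, rfl⟩ : ∃ i, Y = i + 1 := ⟨Y - 1, by omega⟩
    refine ⟨x, i, by omega, ?_⟩
    have := h x hx
    push_cast
    linarith
  · refine ⟨x, Y + 1, ?_, ?_⟩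
    · have := sk_adj G hconn p hx
      omega
    · push_cast
      linarith
  · exact ⟨z, Y, hg, by linarith⟩

theorem sk_step {V : Type*} (G : SimpleGraph V) (hconn : G.Connected) (A κ : ℝ) (hκ : 0 < κ)
    (hA : 0 ≤ A) (T T' : V → ℝ)
    (hF : ∀ v, (∃ x, G.Adj v x ∧ T' v ≤ T x - A - κ) ∨ (∀ x, G.Adj v x → T' v ≤ T x + A - κ) ∨
      T' v ≤ T v - κ)
    (hS : ∀ v, (∀ x, G.Adj v x → T x - (A + 2*κ) - κ/2 ≤ T' v) ∨
      (∃ x, G.Adj v x ∧ T x + (A + 2*κ) - κ/2 ≤ T' v) ∨ T v - κ/2 ≤ T' v)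
    (hU : ∀ v, T' v ≤ T v ∨ ∀ x, G.Adj v x → T' v ≤ T x - κ)
    (hDn : ∀ v, (∀ x, G.Adj v x → T x + κ/2 ≤ T' v) ∨ T v - 3*κ/2 ≤ T' v)
    (tv tw : ℝ) (k n : ℕ) (hno : κ * (n + 1) / 2 < tv - tw - (A + 2*κ) * k)
    (hI : SkInv G A κ T' tv tw k n) : SkInv G A κ T tv tw k (n + 1) := by
  have hn0 : 0 ≤ κ * n := by positivity
  obtain ⟨p, z, y, g, j, Y, hz, hy, hj, hW⟩ := hI
  have key : ∀ m : ℕ, g + m ≤ Y → A * g + A * m ≤ A * Y ∧ κ * g + κ * m ≤ κ * Y := by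
    intro m hm
    have hm' : (g:ℝ) + m ≤ Y := by exact_mod_cast hm
    constructor
    · nlinarith
    · nlinarith
  have hg0 : 0 ≤ κ * g := by positivity
  have hAj : 0 ≤ A * j := by positivity
  -- the case of an ordinary anchor
  have caseA : tv ≤ T' p + A * g → g + G.dist z p ≤ Y → SkInv G A κ T tv tw k (n + 1) := by
    intro hp hY
    have hzp : z ≠ p := by
      rintro rfl
      have h1 := key 0 (by omega)
      push_cast at h1
      linarith
    have hpz : p ≠ z := hzp.symm
    obtain ⟨x, hx, hxd⟩ := sk_closer G hconn p z hpz
    rw [SimpleGraph.dist_comm (u := p), SimpleGraph.dist_comm (u := x)] at hxd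
    by_cases hyp : y = p
    · subst hyp
      rcases hU y with hC | hC
      · rcases hF y with ⟨x', hx', h⟩ | h | h
        · obtain ⟨z', Y', hd', hz'⟩ := sk_zstep G hconn A κ T T' hS z y hzp Y g hY
          refine ⟨y, z', x', g, 1, Y', ?_, ?_, ?_, Or.inl ⟨by linarith, hd'⟩⟩
          · push_cast; linarith
          · push_cast; linarith
          · exact (SimpleGraph.dist_eq_one_iff_adj.mpr hx'.symm).le
        · by_cases hxz : z = x
          · subst hxz
            exfalso
            have h1 := key 1 (by omega)
            push_cast at h1
            have h2 := h z hx
            rcases hDn z with h3 | h3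
            · have := h3 y hx.symm
              linarith
            · linarith
          · obtain ⟨z', Y', hd', hz'⟩ := sk_zstep G hconn A κ T T' hS z x hxz Y (g+1) (by omega)
            have h2 := h x hx
            refine ⟨x, z', x, g+1, 0, Y', ?_, ?_, ?_, Or.inl ⟨?_, hd'⟩⟩
            · push_cast; linarith
            · push_cast; linarith
            · simp
            · push_cast; linarith
        · obtain ⟨z', Y', hd', hz'⟩ := sk_zstep G hconn A κ T T' hS z y hzp Y g hY
          refine ⟨y, z', y, g, 0, Y', ?_, ?_, ?_, Or.inl ⟨by linarith, hd'⟩⟩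
          · push_cast; linarith
          · push_cast; linarith
          · simp
      · have h2 := hC x hx
        by_cases hxz : z = x
        · subst hxz
          have h1 := key 1 (by omega)
          push_cast at h1
          rcases hDn z with h3 | h3
          · have h4 := h3 y hx.symm
            refine ⟨z, y, z, g, 0, Y, ?_, ?_, ?_, Or.inl ⟨by linarith, ?_⟩⟩
            · push_cast; linarith
            · push_cast; linarith
            · simp
            · rw [SimpleGraph.dist_comm]; exact hY
          · exfalso
            linarith
        · obtain ⟨z', Y', hd', hz'⟩ := sk_zstep G hconn A κ T T' hS z x hxz Y g (by omega)
          refine ⟨x, z', x, g, 0, Y', ?_, ?_, ?_, Or.inl ⟨by linarith, hd'⟩⟩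
          · push_cast; linarith
          · push_cast; linarith
          · simp
    · obtain ⟨y', j', hdj, hy'⟩ := sk_ystep G hconn A κ T T' hF y p hyp j hj
      rcases hU p with hC | hC
      · obtain ⟨z', Y', hd', hz'⟩ := sk_zstep G hconn A κ T T' hS z p hzp Y g hY
        refine ⟨p, z', y', g, j', Y', ?_, ?_, hdj, Or.inl ⟨by linarith, hd'⟩⟩
        · push_cast; linarith
        · push_cast; linarith
      · have h2 := hC x hx
        by_cases hxz : z = x
        · subst hxz
          have h1 := key 1 (by omega)
          push_cast at h1
          rcases hDn z with h3 | h3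
          · have h4 := h3 p hx.symm
            refine ⟨p, p, y', g, j', Y, ?_, ?_, hdj, Or.inr ⟨z, hx, by linarith, ?_⟩⟩
            · push_cast; linarith
            · push_cast; linarith
            · simp; omega
          · exfalso
            linarith
        · obtain ⟨z', Y', hd', hz'⟩ := sk_zstep G hconn A κ T T' hS z x hxz Y (g+1) (by omega)
          refine ⟨x, z', y', g+1, j'+1, Y', ?_, ?_, ?_, Or.inl ⟨?_, hd'⟩⟩
          · push_cast; linarith
          · push_cast; linarith
          · have := sk_adj' G hconn y' hx
            omega
          · push_cast; linarith
  rcases hW with ⟨hp, hY⟩ | ⟨q, hq, hp, hY⟩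
  · exact caseA hp hY
  by_cases hyp : y = p
  · subst hyp
    exact caseA (by linarith) (by omega)
  obtain ⟨y', j', hdj, hy'⟩ := sk_ystep G hconn A κ T T' hF y p hyp j hj
  have h1 := key 1 (by omega)
  push_cast at h1
  by_cases hzp : z = p
  · subst hzp
    rcases hU q with hC | hC
    · rcases hS z with h | ⟨x, hx, h⟩ | h
      · exfalso
        have := h q hq
        linarith
      · refine ⟨z, x, y', g, j', Y+1, ?_, ?_, hdj, Or.inr ⟨q, hq, by linarith, ?_⟩⟩
        · push_cast; linarith
        · push_cast; linarith
        · have := SimpleGraph.dist_eq_one_iff_adj.mpr hx.symm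
          simp at hY
          omega
      · refine ⟨z, z, y', g, j', Y, ?_, ?_, hdj, Or.inr ⟨q, hq, by linarith, hY⟩⟩
        · push_cast; linarith
        · push_cast; linarith
    · have h2 := hC z hq.symm
      rcases hDn z with h3 | h3
      · have h4 := h3 q hq
        refine ⟨z, q, y', g, j', Y, ?_, ?_, hdj, Or.inl ⟨by linarith, ?_⟩⟩
        · push_cast; linarith
        · push_cast; linarith
        · have := SimpleGraph.dist_eq_one_iff_adj.mpr hq.symm
          simp at hY
          omega
      · exfalso
        linarith
  · obtain ⟨z', Y', hd', hz'⟩ := sk_zstep G hconn A κ T T' hS z p hzp Y (g+1) (by omega)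
    rcases hU q with hC | hC
    · refine ⟨p, z', y', g, j', Y', ?_, ?_, hdj, Or.inr ⟨q, hq, by linarith, hd'⟩⟩
      · push_cast; linarith
      · push_cast; linarith
    · have h2 := hC p hq.symm
      refine ⟨p, z', y', g, j', Y', ?_, ?_, hdj, Or.inl ⟨by linarith, by omega⟩⟩
      · push_cast; linarith
      · push_cast; linarith

theorem sk_half {V : Type*} (G : SimpleGraph V) (hconn : G.Connected) (A κ : ℝ) (hκ : 0 < κ)
    (hA : 2 * κ ≤ A) (τ : V → ℕ → ℝ)
    (hF : ∀ ℓ v, (∃ x, G.Adj v x ∧ τ v (ℓ+1) ≤ τ x ℓ - A - κ) ∨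
      (∀ x, G.Adj v x → τ v (ℓ+1) ≤ τ x ℓ + A - κ) ∨ τ v (ℓ+1) ≤ τ v ℓ - κ)
    (hS : ∀ ℓ v, (∀ x, G.Adj v x → τ x ℓ - (A + 2*κ) - κ/2 ≤ τ v (ℓ+1)) ∨
      (∃ x, G.Adj v x ∧ τ x ℓ + (A + 2*κ) - κ/2 ≤ τ v (ℓ+1)) ∨ τ v ℓ - κ/2 ≤ τ v (ℓ+1))
    (hU : ∀ ℓ v, τ v (ℓ+1) ≤ τ v ℓ ∨ ∀ x, G.Adj v x → τ v (ℓ+1) ≤ τ x ℓ - κ)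
    (hDn : ∀ ℓ v, (∀ x, G.Adj v x → τ x ℓ + κ/2 ≤ τ v (ℓ+1)) ∨ τ v ℓ - 3*κ/2 ≤ τ v (ℓ+1))
    (lo : ℕ) (P : ℝ) (hP0 : 0 ≤ P)
    (hP : ∀ ℓ, lo ≤ ℓ → ∀ v w, τ v ℓ - τ w ℓ - (A - 2*κ) * G.dist v w ≤ P)
    (ℓ : ℕ) (hℓ : lo + ⌊P/κ⌋₊ ≤ ℓ) (v w : V) :
    τ v ℓ - τ w ℓ - (A + 2*κ) * G.dist v w ≤ P/2 := by
  by_contra hcon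
  push Not at hcon
  set N := ⌊P/κ⌋₊ with hN
  have hN1 : (N:ℝ) * κ ≤ P := by
    have := Nat.floor_le (div_nonneg hP0 hκ.le)
    rwa [← hN, le_div_iff₀ hκ] at this
  have hN2 : P < (N + 1) * κ := by
    have := Nat.lt_floor_add_one (P/κ)
    rwa [← hN, div_lt_iff₀ hκ] at this
  have hinv : ∀ n : ℕ, n ≤ N → SkInv G A κ (fun x => τ x (ℓ - n)) (τ v ℓ) (τ w ℓ) (G.dist v w) n := by
    intro n
    induction n with
    | zero =>
      intro _
      refine ⟨v, w, v, 0, 0, G.dist v w, by simp, by simp, by simp, Or.inl ⟨by simp, ?_⟩⟩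
      rw [SimpleGraph.dist_comm]; simp
    | succ n ih =>
      intro hn
      have hI := ih (by omega)
      have e : ℓ - n = (ℓ - (n+1)) + 1 := by omega
      rw [e] at hI
      refine sk_step G hconn A κ hκ (by linarith) _ _ (hF _) (hS _) (hU _) (hDn _) _ _ _ n ?_ hI
      have : ((n:ℝ) + 1) ≤ N := by exact_mod_cast hn
      nlinarith
  obtain ⟨p, z, y, g, j, Y, hz, hy, hj, hW⟩ := hinv N le_rfl
  simp only at hz hy hW
  have hdist : G.dist y z ≤ G.dist y p + G.dist z p := by
    rw [SimpleGraph.dist_comm (u := z)]; exact hconn.dist_triangle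
  have hYg : g + 1 ≤ Y ∧ g + G.dist z p ≤ Y := by
    rcases hW with ⟨hp, hY⟩ | ⟨q, hq, hp, hY⟩
    · refine ⟨?_, hY⟩
      by_contra hlt
      have h0 : G.dist z p = 0 := by omega
      have hzp : z = p := hconn.dist_eq_zero_iff.mp h0
      subst hzp
      have hgY : (g:ℝ) ≤ Y := by exact_mod_cast (by omega : g ≤ Y)
      have h3 : 0 ≤ κ * Y := by positivity
      have h4 : A * g ≤ A * Y := mul_le_mul_of_nonneg_left hgY (by linarith)
      linarith
    · exact ⟨by omega, by omega⟩
  have hd2 : (G.dist y z : ℝ) ≤ j + Y - g := by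
    have : G.dist y z + g ≤ j + Y := by omega
    have : (G.dist y z : ℝ) + g ≤ j + Y := by exact_mod_cast this
    linarith
  have hPz := hP (ℓ - N) (by omega) y z
  have h5 : (A - 2*κ) * (G.dist y z : ℝ) ≤ (A - 2*κ) * (j + Y - g) :=
    mul_le_mul_of_nonneg_left hd2 (by linarith)
  have h6 : ((g:ℝ) + 1) ≤ Y := by exact_mod_cast hYg.1
  have h7 : κ * ((g:ℝ) + 1) ≤ κ * Y := mul_le_mul_of_nonneg_left h6 hκ.le
  have h8 : 0 ≤ κ * j := by positivity
  have h9 : 0 ≤ κ * g := by positivity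
  linarith

theorem sk_iter {V : Type*} (G : SimpleGraph V) (κ : ℝ) (hκ : 0 < κ) (τ : V → ℕ → ℝ) [Nonempty V]
    (hhalf : ∀ (s lo : ℕ) (P : ℝ), 0 ≤ P →
      (∀ ℓ, lo ≤ ℓ → ∀ v w, τ v ℓ - τ w ℓ - 4*(s:ℝ)*κ * G.dist v w ≤ P) →
      ∀ ℓ, lo + ⌊P/κ⌋₊ ≤ ℓ → ∀ v w, τ v ℓ - τ w ℓ - 4*((s+1:ℕ):ℝ)*κ * G.dist v w ≤ P/2)
    (m : ℕ) : ∀ (s lo : ℕ) (P : ℝ), 0 ≤ P →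
      (∀ ℓ, lo ≤ ℓ → ∀ v w, τ v ℓ - τ w ℓ - 4*(s:ℝ)*κ * G.dist v w ≤ P) →
      ∀ ℓ : ℕ, (lo:ℝ) + 2*P/κ ≤ ℓ →
        ∀ v w, τ v ℓ - τ w ℓ - 4*((s+m:ℕ):ℝ)*κ * G.dist v w ≤ P/2^m := by
  induction m with
  | zero =>
    intro s lo P hP0 hP ℓ hℓ v w
    have : 0 ≤ 2*P/κ := by positivity
    have h2 : (lo:ℝ) ≤ ℓ := by linarith
    simpa using hP ℓ (by exact_mod_cast h2) v w
  | succ m ih =>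
    intro s lo P hP0 hP ℓ hℓ v w
    have h := ih (s+1) (lo + ⌊P/κ⌋₊) (P/2) (by positivity) (hhalf s lo P hP0 hP) ℓ ?_ v w
    · have e : s + 1 + m = s + (m+1) := by ring
      rw [e] at h
      have e2 : P/2/2^m = P/2^(m+1) := by rw [pow_succ]; field_simp
      rwa [e2] at h
    · have h1 := Nat.floor_le (div_nonneg hP0 hκ.le)
      push_cast
      have e1 : 2*(P/2)/κ = P/κ := by ring
      have e2 : 2*P/κ = P/κ + P/κ := by ring
      rw [e1]
      linarith


/-- The `tmax`/`tmin` over neighbours in the SC/FC/JC conditions are expressed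
pointwise over the (nonempty) neighbourhood, which is equivalent. -/
theorem stmt13
    (ϑ u d Λ κ : ℝ)
    (hϑ : 1 < ϑ) (hu : 0 ≤ u) (hd : u ≤ d) (hΛ : d < Λ)
    (hκ : κ = 2 * (u + (1 - 1/ϑ) * (Λ - d)))
    {V : Type*} [Fintype V] [Nonempty V]
    (G : SimpleGraph V) [DecidableRel G.Adj]
    (hconn : G.Connected) (hdeg : ∀ v : V, 2 ≤ G.degree v)
    (D : ℕ) (hD : 1 ≤ D) (hdiam : ∀ v w : V, G.dist v w ≤ D)
    (t : V → ℕ → ℝ) (C : V → ℕ → ℝ)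
    (hDRIFT : ∀ (v : V) (ℓ : ℕ),
      d - u + (Λ - d - C v (ℓ+1)) / ϑ ≤ t v (ℓ+1) - t v ℓ ∧
      t v (ℓ+1) - t v ℓ ≤ Λ - C v (ℓ+1))
    (hSC : ∀ (s : ℕ) (v : V) (ℓ : ℕ),
      (∀ w : V, G.Adj v w → C v (ℓ+1) / ϑ ≤ t v ℓ - t w ℓ + 4*(s:ℝ)*κ) ∨
      (∃ w : V, G.Adj v w ∧ C v (ℓ+1) / ϑ ≤ t v ℓ - t w ℓ - 4*(s:ℝ)*κ) ∨
      C v (ℓ+1) ≤ 0)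
    (hFC : ∀ (s : ℕ), 1 ≤ s → ∀ (v : V) (ℓ : ℕ),
      (∃ w : V, G.Adj v w ∧ t v ℓ - t w ℓ + (4*(s:ℝ)-2)*κ + κ ≤ C v (ℓ+1)) ∨
      (∀ w : V, G.Adj v w → t v ℓ - t w ℓ - (4*(s:ℝ)-2)*κ + κ ≤ C v (ℓ+1)) ∨
      κ ≤ C v (ℓ+1))
    (hJC : ∀ (v : V) (ℓ : ℕ),
      (κ < C v (ℓ+1)/ϑ ∧ ∀ w : V, G.Adj v w → C v (ℓ+1)/ϑ ≤ t v ℓ - t w ℓ - κ) ∨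
      (C v (ℓ+1) < 0 ∧ ∀ w : V, G.Adj v w → t v ℓ - t w ℓ + κ ≤ C v (ℓ+1)) ∨
      (0 ≤ C v (ℓ+1)/ϑ ∧ C v (ℓ+1)/ϑ ≤ κ))
    (s s' : ℕ) (hss' : s ≤ s') (lo : ℕ) (Ψs : ℝ)
    (hΨ : ∀ ℓ : ℕ, lo ≤ ℓ → ∀ v w : V,
      t v ℓ - t w ℓ - 4*(s:ℝ)*κ*(G.dist v w : ℝ) ≤ Ψs) :
    (∀ ℓ : ℕ, lo ≤ ℓ → (ℓ:ℝ) < (lo:ℝ) + 2*Ψs/κ →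
      ∀ v w : V, G.Adj v w → |t v ℓ - t w ℓ| ≤ 4*(s:ℝ)*κ + Ψs) ∧
    (∀ ℓ : ℕ, (lo:ℝ) + 2*Ψs/κ ≤ (ℓ:ℝ) →
      ∀ v w : V, G.Adj v w → |t v ℓ - t w ℓ| ≤ 4*(s':ℝ)*κ + Ψs/2^(s'-s)) := by
  have hϑ0 : 0 < ϑ := by linarith
  have hκ0 : 0 < κ := by
    have h1 : 1/ϑ < 1 := by rw [div_lt_one hϑ0]; exact hϑ
    have h2 : 0 < (1 - 1/ϑ) * (Λ - d) := mul_pos (by linarith) (by linarith)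
    linarith
  have hlow : ∀ v ℓ, Λ - κ/2 - C v (ℓ+1) / ϑ ≤ t v (ℓ+1) - t v ℓ := by
    intro v ℓ
    have h := (hDRIFT v ℓ).1
    have e : d - u + (Λ - d - C v (ℓ+1)) / ϑ = Λ - κ/2 - C v (ℓ+1) / ϑ := by
      rw [hκ]; field_simp; ring
    linarith
  have hup : ∀ v ℓ, t v (ℓ+1) - t v ℓ ≤ Λ - C v (ℓ+1) := fun v ℓ => (hDRIFT v ℓ).2
  have hhalf : ∀ (s lo : ℕ) (P : ℝ), 0 ≤ P →
      (∀ ℓ, lo ≤ ℓ → ∀ v w, t v ℓ - t w ℓ - 4*(s:ℝ)*κ * G.dist v w ≤ P) →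
      ∀ ℓ, lo + ⌊P/κ⌋₊ ≤ ℓ → ∀ v w, t v ℓ - t w ℓ - 4*((s+1:ℕ):ℝ)*κ * G.dist v w ≤ P/2 := by
    intro s lo P hP0 hP ℓ hℓ v w
    have h := sk_half G hconn ((4*((s+1:ℕ):ℝ)-2)*κ) κ hκ0
      (by have : 0 ≤ κ * s := by positivity
          push_cast; linarith)
      (fun v ℓ => t v ℓ - Λ * ℓ) ?_ ?_ ?_ ?_ lo P hP0 ?_ ℓ hℓ v w
    · push_cast at h ⊢
      ring_nf at h ⊢
      linarith
    · intro ℓ v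
      have h0 := hup v ℓ
      rcases hFC (s+1) (by omega) v ℓ with ⟨x, hx, h⟩ | h | h
      · exact Or.inl ⟨x, hx, by push_cast at h ⊢; linarith⟩
      · refine Or.inr (Or.inl fun x hx => ?_)
        have := h x hx
        push_cast at this ⊢; linarith
      · refine Or.inr (Or.inr ?_)
        push_cast; linarith
    · intro ℓ v
      have h0 := hlow v ℓ
      rcases hSC (s+1) v ℓ with h | ⟨x, hx, h⟩ | h
      · refine Or.inl fun x hx => ?_
        have := h x hx
        push_cast at this ⊢; linarith
      · exact Or.inr (Or.inl ⟨x, hx, by push_cast at h ⊢; linarith⟩)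
      · refine Or.inr (Or.inr ?_)
        have := div_nonpos_of_nonpos_of_nonneg h hϑ0.le
        push_cast; linarith
    · intro ℓ v
      have h0 := hup v ℓ
      rcases hJC v ℓ with ⟨h, _⟩ | ⟨_, h⟩ | ⟨h, _⟩
      · left
        have : 0 < C v (ℓ+1) := (div_pos_iff_of_pos_right hϑ0).mp (by linarith)
        push_cast; linarith
      · refine Or.inr fun x hx => ?_
        have := h x hx
        push_cast; linarith
      · left
        have : 0 ≤ C v (ℓ+1) := by
          by_contra hc
          have := div_neg_of_neg_of_pos (not_le.mp hc) hϑ0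
          linarith
        push_cast; linarith
    · intro ℓ v
      have h0 := hlow v ℓ
      rcases hJC v ℓ with ⟨_, h⟩ | ⟨h, _⟩ | ⟨_, h⟩
      · refine Or.inl fun x hx => ?_
        have := h x hx
        push_cast; linarith
      · right
        have := div_neg_of_neg_of_pos h hϑ0
        push_cast; linarith
      · right
        push_cast; linarith
    · intro ℓ hℓ v w
      have := hP ℓ hℓ v w
      push_cast at this ⊢
      ring_nf at this ⊢
      linarith
  have hP0 : 0 ≤ Ψs := by
    obtain ⟨v⟩ := ‹Nonempty V›
    simpa using hΨ lo le_rfl v v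
  have hadj : ∀ v w, G.Adj v w → (G.dist v w : ℝ) = 1 := by
    intro v w h
    rw [SimpleGraph.dist_eq_one_iff_adj.mpr h]; simp
  constructor
  · intro ℓ hℓ _ v w h
    have h1 := hΨ ℓ hℓ v w
    have h2 := hΨ ℓ hℓ w v
    rw [hadj _ _ h] at h1
    rw [hadj _ _ h.symm] at h2
    rw [abs_le]; constructor <;> linarith
  · intro ℓ hℓ v w h
    have hm := sk_iter G κ hκ0 t hhalf (s' - s) s lo Ψs hP0 hΨ ℓ hℓ
    have h1 := hm v w
    have h2 := hm w v
    rw [hadj _ _ h, Nat.add_sub_cancel' hss'] at h1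
    rw [hadj _ _ h.symm, Nat.add_sub_cancel' hss'] at h2
    rw [abs_le]; constructor <;> linarith
end
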